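/- arXiv:1801.07982 — 2 statements merged into one kernel-verified Lean document; each statement's English description precedes it below -/
import Mathlib

section
/- Let A be a finite set of nonzero rational numbers with -1 ∉ A, let K be a positive integer, and suppose that |AA| ≤ K|A|. Then for every integer k ≥ 2, the k-fold product set of the shift A+1 satisfies |(A+1)^{(k)}| ≥ |A|^k / (8k^4)^{kK}. -/
open Finset Pointwise

/-- The `k`-fold product set of a finite set `B` of rationals:
`B^(k) = {b₁ ⋯ b_k : bᵢ ∈ B}`. -/
def kfoldProd (k : ℕ) (B : Finset ℚ) : Finset ℚ :=
  (Fintype.piFinset fun _ : Fin k => B).image fun f => ∏ i, f i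

/-!
Let `E` be the number of solutions of `∏ i, (1 + x i) = ∏ i, (1 + y i)` in a set `A` of nonzero
rationals, with `k` variables on each side. By Cauchy–Schwarz it is enough to bound `E` from above,
and `E ^ (1 / 2k)` is an `L^{2k}` norm of a character sum, so that Hölder's inequality and the
triangle inequality are available.

If all elements of `A` have nonnegative valuation at a prime `p`, then two of the `2k` variables of
every solution have the same `p`-adic absolute value: otherwise, after expanding both products, the
variable of the largest absolute value is a term that no other term cancels. Hölder's inequality
then bounds the square of the norm by `(2k).choose 2` times the sum of the squares of the norms of
the fibres of the valuation at `p`. Negative valuations are treated by inverting the variables,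
which preserves the equation as soon as `∏ i, x i = ∏ i, y i`.

By Freiman's lemma, if `|AA| ≤ K|A|` and `A` is large, fewer than `K` primes determine the elements
of `A` up to sign. Split `A` according to the sign of its elements and of their valuations at these
primes, and fix the valuations one prime at a time until a single element is left.
-/

universe u

section Characters

theorem exists_injective_addCircle_rat_toCircle :
    ∃ e : Multiplicative (AddCircle (1 : ℚ)) →* Circle, Function.Injective e := by
  let coeHom : ℚ →+ AddCircle (1 : ℝ) :=
    (QuotientAddGroup.mk' _).comp (algebraMap ℚ ℝ).toAddMonoidHom
  have coeHom_eq_zero_iff (q : ℚ) : coeHom q = 0 ↔ (q : AddCircle (1 : ℚ)) = 0 := by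
    change ((q : ℝ) : AddCircle (1 : ℝ)) = 0 ↔ _
    simp only [AddCircle.coe_eq_zero_iff, zsmul_eq_mul, mul_one]
    exact exists_congr fun n => by norm_cast
  let lifted : AddCircle (1 : ℚ) →+ AddCircle (1 : ℝ) :=
    QuotientAddGroup.lift _ coeHom fun q hq =>
      (coeHom_eq_zero_iff q).2 ((QuotientAddGroup.eq_zero_iff q).2 hq)
  refine ⟨(AddCircle.toCircle_addChar.compAddMonoidHom lifted).toMonoidHom,
    (AddCircle.injective_toCircle one_ne_zero).comp ?_⟩
  refine (injective_iff_map_eq_zero lifted).2 fun x hx => ?_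
  induction x using QuotientAddGroup.induction_on with
  | H q => exact (coeHom_eq_zero_iff q).1 hx

variable {G : Type u} [CommGroup G]

theorem exists_monoidHom_circle_apply_ne_one {g : G} (hg : g ≠ 1) :
    ∃ χ : G →* Circle, χ g ≠ 1 ∧ IsOfFinOrder (χ g) := by
  obtain ⟨e, he⟩ := exists_injective_addCircle_rat_toCircle
  obtain ⟨c, hc⟩ := CharacterModule.exists_character_apply_ne_zero_of_ne_zero
    (A := Additive G) (a := .ofMul g) hg
  refine ⟨e.comp (AddMonoidHom.toMultiplicativeRight c),
    fun h => hc ((injective_iff_map_eq_one e).1 he _ h), e.isOfFinOrder ?_⟩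
  refine isOfFinOrder_ofAdd_iff.2 ?_
  induction c (.ofMul g) using QuotientAddGroup.induction_on with
  | H q => exact AddCircle.isOfFinAddOrder_iff_exists_rat_eq_div.2 ⟨q, by simp⟩

-- Averaging over the powers of a finite-order character that is nontrivial at `g` gives `0` at
-- `g`; the product of such families over `S` does so at every element of `S`.
theorem exists_characters_sum_eq_zero (S : Finset G) (hS : 1 ∉ S) :
    ∃ (Ω : Type u) (_ : Fintype Ω) (_ : Nonempty Ω) (χ : Ω → G →* Circle),
      ∀ g ∈ S, ∑ ω, (χ ω g : ℂ) = 0 := by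
  classical
  have hne (s : S) : (s : G) ≠ 1 := fun h => hS (h ▸ s.2)
  choose c c_ne_one c_fin using fun s : S => exists_monoidHom_circle_apply_ne_one (hne s)
  let n (s : S) : ℕ := orderOf (c s s)
  have (s : S) : NeZero (n s) := ⟨(c_fin s).orderOf_pos.ne'⟩
  refine ⟨(s : S) → Fin (n s), inferInstance, inferInstance,
    fun ω => ∏ s, c s ^ (ω s : ℕ), fun g hg => ?_⟩
  have sum_eq_prod : ∑ ω : (s : S) → Fin (n s), (((∏ s, c s ^ (ω s : ℕ)) g : Circle) : ℂ) =
      ∏ s, ∑ j : Fin (n s), (c s g : ℂ) ^ (j : ℕ) := by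
    rw [prod_univ_sum, Fintype.piFinset_univ]
    refine sum_congr rfl fun ω _ => ?_
    rw [MonoidHom.finsetProd_apply]
    exact map_prod Circle.coeHom _ _
  rw [sum_eq_prod]
  refine prod_eq_zero (mem_univ ⟨g, hg⟩) ?_
  have ne_one : (c ⟨g, hg⟩ g : ℂ) ≠ 1 := fun h => c_ne_one ⟨g, hg⟩ (Circle.ext h)
  have pow_eq_one : (c ⟨g, hg⟩ g : ℂ) ^ n ⟨g, hg⟩ = 1 :=
    congrArg Circle.coeHom (pow_orderOf_eq_one (c ⟨g, hg⟩ g))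
  rw [Fin.sum_univ_eq_sum_range (fun j => (c ⟨g, hg⟩ g : ℂ) ^ j), geom_sum_eq ne_one,
    pow_eq_one, sub_self, zero_div]

theorem exists_orthogonal_mulChars {M : Type u} [CommMonoid M] [DecidableEq M] (S : Finset M)
    (hS : ∀ a ∈ S, IsUnit a) :
    ∃ (Ω : Type u) (_ : Fintype Ω) (_ : Nonempty Ω) (χ : Ω → MulChar M ℂ), ∀ a ∈ S, ∀ b ∈ S,
      ∑ ω, χ ω a * star (χ ω b) = if a = b then (Fintype.card Ω : ℂ) else 0 := by
  lift S to Finset Mˣ using hS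
  obtain ⟨Ω, hΩ, hne, χ, hχ⟩ := exists_characters_sum_eq_zero ((S / S).erase 1) (by simp)
  refine ⟨Ω, hΩ, hne, fun ω => .ofUnitHom (Circle.toUnits.comp (χ ω)), ?_⟩
  simp only [forall_mem_image, MulChar.ofUnitHom_coe, Units.val_inj]
  intro a ha b hb
  have apply_mul_star (ω : Ω) : (χ ω a : ℂ) * star (χ ω b : ℂ) = χ ω (a / b) := by
    rw [map_div, Circle.coe_div, div_eq_mul_inv, ← Circle.coe_inv, Circle.coe_inv_eq_conj]
    rfl
  calc ∑ ω, (χ ω a : ℂ) * star (χ ω b : ℂ) = ∑ ω, (χ ω (a / b) : ℂ) :=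
        sum_congr rfl fun ω _ => apply_mul_star ω
    _ = if a = b then (Fintype.card Ω : ℂ) else 0 := by
        split_ifs with hab
        · simp [hab]
        · exact hχ _ (mem_erase.2 ⟨div_ne_one.2 hab, div_mem_div ha hb⟩)

end Characters

theorem sum_prod_rpow_le_prod_sum_rpow {κ Ω : Type*} [Fintype κ] [Fintype Ω] {w : κ → ℝ}
    (hw0 : ∀ i, 0 ≤ w i) (hw1 : ∑ i, w i = 1) {s : κ → Ω → ℝ} (hs : ∀ i ω, 0 ≤ s i ω) :
    ∑ ω, ∏ i, s i ω ^ w i ≤ ∏ i, (∑ ω, s i ω) ^ w i := by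
  set T : κ → ℝ := fun i => ∑ ω, s i ω
  have hT (i : κ) : 0 ≤ T i := sum_nonneg fun ω _ => hs i ω
  have split (i : κ) (ω : Ω) : s i ω ^ w i = T i ^ w i * (s i ω / T i) ^ w i := by
    rw [← Real.mul_rpow (hT i) (div_nonneg (hs i ω) (hT i)), mul_div_cancel_of_imp']
    exact fun h => (sum_eq_zero_iff_of_nonneg fun ω _ => hs i ω).1 h ω (mem_univ ω)
  calc ∑ ω, ∏ i, s i ω ^ w i
      = (∏ i, T i ^ w i) * ∑ ω, ∏ i, (s i ω / T i) ^ w i := by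
        simp only [split, prod_mul_distrib, mul_sum]
    _ ≤ (∏ i, T i ^ w i) * ∑ ω, ∑ i, w i * (s i ω / T i) := by
        gcongr with ω
        · exact prod_nonneg fun i _ => Real.rpow_nonneg (hT i) _
        · exact Real.geom_mean_le_arith_mean_weighted univ w _ (fun i _ => hw0 i) hw1
            fun i _ => div_nonneg (hs i ω) (hT i)
    _ = (∏ i, T i ^ w i) * ∑ i, w i * (T i / T i) := by
        rw [sum_comm]
        simp only [← mul_sum, ← sum_div, T]
    _ ≤ (∏ i, T i ^ w i) * ∑ i, w i * 1 := by
        gcongr with i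
        · exact prod_nonneg fun i _ => Real.rpow_nonneg (hT i) _
        · exact hw0 i
        · exact div_self_le_one _
    _ = ∏ i, T i ^ w i := by simp [hw1]

section Solutions

variable {α ι : Type*} {M : Type u} [CommMonoid M] [DecidableEq M] [Fintype ι] [DecidableEq ι]

/-- The solutions of `∏ i, f (x i) = ∏ i, f (y i)` with `x i` and `y i` constrained to given finite
sets; a solution `(x, y)` is encoded as one function on `ι ⊕ ι`. -/
def prodSolutions (f : α → M) (X : ι ⊕ ι → Finset α) : Finset (ι ⊕ ι → α) :=
  {x ∈ Fintype.piFinset X | ∏ i, f (x (.inl i)) = ∏ i, f (x (.inr i))}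

theorem mem_prodSolutions {f : α → M} {X : ι ⊕ ι → Finset α} {x : ι ⊕ ι → α} :
    x ∈ prodSolutions f X ↔
      (∀ i, x i ∈ X i) ∧ ∏ i, f (x (.inl i)) = ∏ i, f (x (.inr i)) := by
  simp only [prodSolutions, mem_filter, Fintype.mem_piFinset]

theorem card_mul_card_prodSolutions {Ω : Type*} [Fintype Ω] {χ : Ω → MulChar M ℂ} {f : α → M}
    {U : Finset α}
    (hχ : ∀ y ∈ Fintype.piFinset fun _ : ι => U, ∀ z ∈ Fintype.piFinset fun _ : ι => U,
      ∑ ω, χ ω (∏ i, f (y i)) * star (χ ω (∏ i, f (z i))) =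
        if ∏ i, f (y i) = ∏ i, f (z i) then (Fintype.card Ω : ℂ) else 0)
    {X : ι ⊕ ι → Finset α} (hX : ∀ i, X i ⊆ U) :
    (Fintype.card Ω * #(prodSolutions f X) : ℂ) =
      ∑ ω, (∏ i, ∑ a ∈ X (.inl i), χ ω (f a)) * ∏ i, star (∑ a ∈ X (.inr i), χ ω (f a)) := by
  have expand (ω : Ω) :
      (∏ i, ∑ a ∈ X (.inl i), χ ω (f a)) * ∏ i, star (∑ a ∈ X (.inr i), χ ω (f a)) =
        ∑ x ∈ Fintype.piFinset X,
          χ ω (∏ i, f (x (.inl i))) * star (χ ω (∏ i, f (x (.inr i)))) := by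
    have := prod_univ_sum X
      fun i a => i.elim (fun _ => χ ω (f a)) fun _ => star (χ ω (f a))
    simpa only [Fintype.prod_sum_type, Sum.elim_inl, Sum.elim_inr, ← star_sum, ← star_prod,
      ← map_prod] using this
  simp only [expand]
  rw [sum_comm, prodSolutions, card_filter, Nat.cast_sum, mul_sum]
  refine sum_congr rfl fun x hx => ?_
  rw [Fintype.mem_piFinset] at hx
  rw [hχ _ (Fintype.mem_piFinset.2 fun i => hX _ (hx _)) _
    (Fintype.mem_piFinset.2 fun i => hX _ (hx _)), Nat.cast_ite, mul_ite, Nat.cast_one, mul_one,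
    Nat.cast_zero, mul_zero]

theorem exists_character_moments {f : α → M} {U : Finset α} (hf : ∀ a ∈ U, IsUnit (f a)) :
    ∃ (Ω : Type u) (_ : Fintype Ω) (_ : Nonempty Ω) (F : Ω → α → ℂ),
      ∀ X : ι ⊕ ι → Finset α, (∀ i, X i ⊆ U) →
        (Fintype.card Ω * #(prodSolutions f X) : ℂ) =
          ∑ ω, (∏ i, ∑ a ∈ X (.inl i), F ω a) * ∏ i, star (∑ a ∈ X (.inr i), F ω a) := by
  obtain ⟨Ω, hΩ, hne, χ, hχ⟩ := exists_orthogonal_mulChars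
    ((Fintype.piFinset fun _ : ι => U).image fun y => ∏ i, f (y i)) (by
      simp only [forall_mem_image, Fintype.mem_piFinset]
      exact fun y hy => IsUnit.prod_univ_iff.2 fun i => hf _ (hy i))
  exact ⟨Ω, hΩ, hne, fun ω a => χ ω (f a), fun X hX => card_mul_card_prodSolutions
    (fun y hy z hz => hχ _ (mem_image_of_mem _ hy) _ (mem_image_of_mem _ hz)) hX⟩

variable (ι) in
/-- The `2k`-th root of the number of solutions of `∏ i, f (x i) = ∏ i, f (y i)` in `X`, where
`k = |ι|`: the `L^{2k}` norm of the character sum of `f` over `X`. -/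
noncomputable def prodNorm (f : α → M) (X : Finset α) : ℝ :=
  (#(prodSolutions f fun _ : ι ⊕ ι => X) : ℝ) ^ ((Fintype.card (ι ⊕ ι) : ℝ)⁻¹)

theorem prodNorm_nonneg (f : α → M) (X : Finset α) : 0 ≤ prodNorm ι f X :=
  Real.rpow_nonneg (Nat.cast_nonneg _) _

theorem prodNorm_pow [Nonempty ι] (f : α → M) (X : Finset α) :
    prodNorm ι f X ^ Fintype.card (ι ⊕ ι) = #(prodSolutions f fun _ : ι ⊕ ι => X) :=
  Real.rpow_inv_natCast_pow (Nat.cast_nonneg _) Fintype.card_ne_zero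

theorem card_prodSolutions_le_prod_prodNorm [Nonempty ι] {f : α → M} {X : ι ⊕ ι → Finset α}
    (hf : ∀ i, ∀ a ∈ X i, IsUnit (f a)) :
    (#(prodSolutions f X) : ℝ) ≤ ∏ j, prodNorm ι f (X j) := by
  classical
  set n := Fintype.card (ι ⊕ ι)
  have hn0 : n ≠ 0 := Fintype.card_ne_zero
  obtain ⟨Ω, _, _, F, hF⟩ := exists_character_moments (ι := ι) (f := f) (U := univ.biUnion X)
    (by simpa only [mem_biUnion, mem_univ, true_and, forall_exists_index] using
      fun a i => hf i a)
  have hXU (i : ι ⊕ ι) : X i ⊆ univ.biUnion X := subset_biUnion_of_mem X (mem_univ i)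
  let s (j : ι ⊕ ι) (ω : Ω) : ℝ := ‖∑ a ∈ X j, F ω a‖
  have hs (j : ι ⊕ ι) (ω : Ω) : 0 ≤ s j ω := norm_nonneg _
  have card_pos : (0 : ℝ) < Fintype.card Ω := Nat.cast_pos.2 Fintype.card_pos
  have count_le : Fintype.card Ω * (#(prodSolutions f X) : ℝ) ≤ ∑ ω, ∏ j, s j ω := by
    have h := (congrArg norm (hF X hXU)).trans_le (norm_sum_le _ _)
    simpa only [norm_mul, norm_prod, norm_star, Complex.norm_natCast, Fintype.prod_sum_type, s]
      using h
  have count_eq (j : ι ⊕ ι) :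
      ∑ ω, s j ω ^ n = Fintype.card Ω * (#(prodSolutions f fun _ : ι ⊕ ι => X j) : ℝ) := by
    refine Complex.ofReal_injective ?_
    push_cast
    rw [hF _ fun _ => hXU j]
    refine sum_congr rfl fun ω _ => ?_
    simp only [prod_const, ← mul_pow, Complex.star_def, Complex.mul_conj', s, n, card_univ,
      Fintype.card_sum, ← two_mul, pow_mul]
  refine le_of_mul_le_mul_left ?_ card_pos
  calc Fintype.card Ω * (#(prodSolutions f X) : ℝ)
      ≤ ∑ ω, ∏ j, (s j ω ^ n) ^ (n⁻¹ : ℝ) := by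
        simpa only [Real.pow_rpow_inv_natCast (hs _ _) hn0] using count_le
    _ ≤ ∏ j, (∑ ω, s j ω ^ n) ^ (n⁻¹ : ℝ) :=
        sum_prod_rpow_le_prod_sum_rpow (fun _ => by positivity) (by simp [n])
          fun j ω => pow_nonneg (hs j ω) n
    _ = ∏ j, ((Fintype.card Ω : ℝ) ^ (n⁻¹ : ℝ) * prodNorm ι f (X j)) := by
        simp only [count_eq, Real.mul_rpow card_pos.le (Nat.cast_nonneg _), prodNorm, n]
    _ = Fintype.card Ω * ∏ j, prodNorm ι f (X j) := by
        rw [prod_mul_distrib, prod_const, card_univ, Real.rpow_inv_natCast_pow card_pos.le hn0]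

theorem prodNorm_le_sum_fiber [Nonempty ι] {β : Type*} [DecidableEq β] {f : α → M} {X : Finset α}
    (hf : ∀ a ∈ X, IsUnit (f a)) (φ : α → β) :
    prodNorm ι f X ≤ ∑ t ∈ X.image φ, prodNorm ι f {x ∈ X | φ x = t} := by
  let T : ι ⊕ ι → Finset β := fun _ => X.image φ
  have cover : #(prodSolutions f fun _ : ι ⊕ ι => X) ≤
      ∑ τ ∈ Fintype.piFinset T, #(prodSolutions f fun i => {x ∈ X | φ x = τ i}) := by
    rw [card_eq_sum_card_fiberwise (f := fun x i => φ (x i)) (t := Fintype.piFinset T)]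
    · refine sum_le_sum fun τ _ => card_le_card fun x hx => ?_
      obtain ⟨hx, hxτ⟩ := mem_filter.1 hx
      obtain ⟨hxX, hxf⟩ := mem_prodSolutions.1 hx
      exact mem_prodSolutions.2 ⟨fun i => mem_filter.2 ⟨hxX i, congrFun hxτ i⟩, hxf⟩
    · exact fun x hx => Fintype.mem_piFinset.2 fun i =>
        mem_image_of_mem φ ((mem_prodSolutions.1 hx).1 i)
  refine le_of_pow_le_pow_left₀ (Fintype.card_ne_zero (α := ι ⊕ ι))
    (sum_nonneg fun t _ => prodNorm_nonneg f _) ?_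
  calc prodNorm ι f X ^ Fintype.card (ι ⊕ ι)
      ≤ ∑ τ ∈ Fintype.piFinset T, (#(prodSolutions f fun i => {x ∈ X | φ x = τ i}) : ℝ) := by
        rw [prodNorm_pow]
        exact_mod_cast cover
    _ ≤ ∑ τ ∈ Fintype.piFinset T, ∏ i, prodNorm ι f {x ∈ X | φ x = τ i} :=
        sum_le_sum fun τ _ => card_prodSolutions_le_prod_prodNorm fun i a ha =>
          hf a (mem_filter.1 ha).1
    _ = (∑ t ∈ X.image φ, prodNorm ι f {x ∈ X | φ x = t}) ^ Fintype.card (ι ⊕ ι) := by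
        rw [← card_univ, ← prod_const]
        exact (prod_univ_sum T fun _ t => prodNorm ι f {x ∈ X | φ x = t}).symm

theorem card_prodSolutions_le_sum_of_repeat {β : Type*} [DecidableEq β] {f : α → M}
    {X : Finset α} (φ : α → β)
    (hφ : ∀ x ∈ prodSolutions f fun _ : ι ⊕ ι => X, ∃ i j, i ≠ j ∧ φ (x i) = φ (x j)) :
    #(prodSolutions f fun _ : ι ⊕ ι => X) ≤
      ∑ s ∈ powersetCard 2 (univ : Finset (ι ⊕ ι)), ∑ t ∈ X.image φ,
        #(prodSolutions f fun i => if i ∈ s then {x ∈ X | φ x = t} else X) := by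
  classical
  rw [← sum_product']
  refine (card_le_card fun x hx => ?_).trans card_biUnion_le
  obtain ⟨hxX, hxf⟩ := mem_prodSolutions.1 hx
  obtain ⟨i, j, hij, hφij⟩ := hφ x hx
  have pair_mem : {i, j} ∈ powersetCard 2 (univ : Finset (ι ⊕ ι)) :=
    mem_powersetCard.2 ⟨subset_univ _, card_pair hij⟩
  refine mem_biUnion.2 ⟨({i, j}, φ (x i)),
    mem_product.2 ⟨pair_mem, mem_image_of_mem φ (hxX i)⟩,
    mem_prodSolutions.2 ⟨fun l => ?_, hxf⟩⟩
  simp only [mem_insert, mem_singleton]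
  split_ifs with hl
  · rcases hl with rfl | rfl
    exacts [mem_filter.2 ⟨hxX _, rfl⟩, mem_filter.2 ⟨hxX _, hφij.symm⟩]
  · exact hxX l

theorem sq_prodNorm_le_of_repeat [Nonempty ι] {β : Type*} [DecidableEq β] {f : α → M}
    {X : Finset α} (hf : ∀ a ∈ X, IsUnit (f a)) (φ : α → β)
    (hφ : ∀ x ∈ prodSolutions f fun _ : ι ⊕ ι => X, ∃ i j, i ≠ j ∧ φ (x i) = φ (x j)) :
    prodNorm ι f X ^ 2 ≤ (Fintype.card (ι ⊕ ι)).choose 2 *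
      ∑ t ∈ X.image φ, prodNorm ι f {x ∈ X | φ x = t} ^ 2 := by
  set n := Fintype.card (ι ⊕ ι) with hn
  set N := prodNorm ι f X
  let N' (t : β) : ℝ := prodNorm ι f {x ∈ X | φ x = t}
  have holder (s) (hs : s ∈ powersetCard 2 (univ : Finset (ι ⊕ ι))) (t : β) :
      (#(prodSolutions f fun i => if i ∈ s then {x ∈ X | φ x = t} else X) : ℝ) ≤
        N' t ^ 2 * N ^ (n - 2) := by
    refine (card_prodSolutions_le_prod_prodNorm fun i a ha => hf a ?_).trans_eq ?_
    · split_ifs at ha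
      exacts [(mem_filter.1 ha).1, ha]
    · simp only [apply_ite (prodNorm ι f), prod_ite, prod_const, N', N, hn]
      congr 2
      · simp [(mem_powersetCard.1 hs).2]
      · simp [filter_not, card_sdiff, (mem_powersetCard.1 hs).2]
  have total : N ^ n ≤ (n.choose 2 * ∑ t ∈ X.image φ, N' t ^ 2) * N ^ (n - 2) := by
    calc N ^ n ≤ ∑ s ∈ powersetCard 2 univ, ∑ t ∈ X.image φ,
          (#(prodSolutions f fun i => if i ∈ s then {x ∈ X | φ x = t} else X) : ℝ) := by
          rw [prodNorm_pow]
          exact_mod_cast card_prodSolutions_le_sum_of_repeat φ hφ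
      _ ≤ ∑ s ∈ powersetCard 2 (univ : Finset (ι ⊕ ι)), ∑ t ∈ X.image φ, N' t ^ 2 * N ^ (n - 2) :=
          sum_le_sum fun s hs => sum_le_sum fun t _ => holder s hs t
      _ = (n.choose 2 * ∑ t ∈ X.image φ, N' t ^ 2) * N ^ (n - 2) := by
          rw [sum_const, card_powersetCard, card_univ, ← sum_mul, nsmul_eq_mul, mul_assoc]
  have two_le : 2 ≤ n := by
    have := Fintype.card_pos (α := ι)
    rw [hn, Fintype.card_sum]
    lia
  have N_nonneg : 0 ≤ N := prodNorm_nonneg f X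
  rcases N_nonneg.eq_or_lt with hN | hN
  · rw [← hN, zero_pow two_ne_zero]
    exact mul_nonneg (Nat.cast_nonneg _) (sum_nonneg fun t _ => sq_nonneg _)
  · refine le_of_mul_le_mul_right ?_ (pow_pos hN (n - 2))
    rwa [← pow_add, Nat.add_sub_cancel' two_le]

theorem prodNorm_le_card [Nonempty ι] (f : α → M) (X : Finset α) : prodNorm ι f X ≤ #X := by
  refine le_of_pow_le_pow_left₀ (Fintype.card_ne_zero (α := ι ⊕ ι)) (Nat.cast_nonneg _) ?_
  have : #(prodSolutions f fun _ : ι ⊕ ι => X) ≤ #X ^ Fintype.card (ι ⊕ ι) :=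
    (card_filter_le _ _).trans_eq (by
      rw [Fintype.card_piFinset, prod_const, card_univ])
  rw [prodNorm_pow]
  exact_mod_cast this

theorem sq_card_le_card_image_mul_card_filter_eq {β γ : Type*} [DecidableEq γ] (T : Finset β)
    (g : β → γ) :
    #T ^ 2 ≤ #(T.image g) * #{x ∈ T ×ˢ T | g x.1 = g x.2} := by
  have : #{x ∈ T ×ˢ T | g x.1 = g x.2} = ∑ t ∈ T.image g, #{x ∈ T | g x = t} ^ 2 := by
    rw [card_eq_sum_card_fiberwise (f := fun x => g x.1) (t := T.image g)]
    · refine sum_congr rfl fun t _ => ?_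
      rw [sq, ← card_product]
      congr 1
      ext ⟨x, y⟩
      simp only [mem_filter, mem_product]
      grind
    · exact fun x hx => mem_image_of_mem g (mem_product.1 (mem_filter.1 hx).1).1
  rw [this, card_eq_sum_card_image g T]
  exact sq_sum_le_card_mul_sum_sq

theorem card_pow_le_card_image_mul_card_prodSolutions (f : α → M) (X : Finset α) :
    #X ^ Fintype.card (ι ⊕ ι) ≤
      #((Fintype.piFinset fun _ : ι => X).image fun y => ∏ i, f (y i)) *
        #(prodSolutions f fun _ : ι ⊕ ι => X) := by
  set T := Fintype.piFinset fun _ : ι => X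
  have collisions : #{x ∈ T ×ˢ T | ∏ i, f (x.1 i) = ∏ i, f (x.2 i)} ≤
      #(prodSolutions f fun _ : ι ⊕ ι => X) := by
    refine card_le_card_of_injOn (fun x => Sum.elim x.1 x.2) ?_
      ((Equiv.sumArrowEquivProdArrow ι ι α).symm.injective.injOn)
    intro x hx
    simpa [mem_prodSolutions, T] using hx
  calc #X ^ Fintype.card (ι ⊕ ι) = #T ^ 2 := by
        rw [Fintype.card_piFinset, prod_const, card_univ, Fintype.card_sum, ← mul_two, pow_mul]
    _ ≤ _ := (sq_card_le_card_image_mul_card_filter_eq T _).trans (Nat.mul_le_mul_left _ collisions)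

end Solutions

section FreimanLemma

variable {𝕜 V : Type*} [Field 𝕜] [AddCommGroup V] [Module 𝕜 V]

theorem exists_dual_injOn [Infinite 𝕜] (S : Finset V) : ∃ ℓ : Module.Dual 𝕜 V, Set.InjOn ℓ S := by
  classical
  obtain ⟨ℓ, hℓ⟩ := Module.exists_dual_forall_apply_ne_zero (K := 𝕜)
    (fun p : S.offDiag => p.1.1 - p.1.2) fun p => sub_ne_zero.2 (mem_offDiag.1 p.2).2.2
  refine ⟨ℓ, fun x hx y hy hxy => ?_⟩
  by_contra hne
  refine hℓ ⟨(x, y), mem_offDiag.2 ⟨hx, hy, hne⟩⟩ ?_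
  rw [map_sub, hxy, sub_self]

variable [DecidableEq V]

theorem add_notMem_add_of_notMem_affineSpan [NeZero (2 : 𝕜)] {b t : V} {B : Finset V}
    (hb : b ∉ affineSpan 𝕜 (B : Set V)) (ht : t = b ∨ t ∈ B) : b + t ∉ B + B := by
  intro h
  obtain ⟨y, hy, z, hz, hyz⟩ := mem_add.1 h
  have mem_of_eq {c : 𝕜} {w : V} (hw : w ∈ B) (h : b = c • (y - w) + z) : False :=
    hb <| h ▸ (affineSpan 𝕜 (B : Set V)).smul_vsub_vadd_mem c (mem_affineSpan 𝕜 hy)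
      (mem_affineSpan 𝕜 hw) (mem_affineSpan 𝕜 hz)
  rcases ht with rfl | ht
  · refine mem_of_eq (c := 2⁻¹) hz ?_
    refine smul_right_injective V (two_ne_zero (α := 𝕜)) ?_
    simp only [smul_add, smul_inv_smul₀ (two_ne_zero (α := 𝕜)), two_smul, ← hyz]
    abel
  · refine mem_of_eq (c := 1) ht ?_
    rw [one_smul, sub_add_eq_add_sub, hyz, add_sub_cancel_right]

theorem le_finrank_vectorSpan_erase_or {S : Finset V} {b : V} (hb : b ∈ S) {d : ℕ}
    (hd : d ≤ Module.finrank 𝕜 (vectorSpan 𝕜 (S : Set V))) :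
    d ≤ Module.finrank 𝕜 (vectorSpan 𝕜 (S.erase b : Set V)) ∨
      d = Module.finrank 𝕜 (vectorSpan 𝕜 (S.erase b : Set V)) + 1 ∧
        b ∉ affineSpan 𝕜 (S.erase b : Set V) := by
  rw [← insert_erase hb, coe_insert] at hd
  by_cases hbS : b ∈ affineSpan 𝕜 (S.erase b : Set V)
  · rw [vectorSpan_insert_eq_vectorSpan hbS] at hd
    exact .inl hd
  · have := hd.trans (finrank_vectorSpan_insert_le_set 𝕜 (S.erase b : Set V) b)
    exact (Nat.le_or_eq_of_le_succ this).imp_right fun h => ⟨h, hbS⟩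

variable {G : Type*} [Mul G] [DecidableEq G] {π : G → V}

theorem card_mul_card_image_le_card_mul [IsCancelMul G] (hπ : ∀ a b, π (a * b) = π a + π b)
    {R : Finset G} (N : Finset G) {v : V} (hR : ∀ a ∈ R, π a = v) :
    #R * #(N.image π) ≤ #(R * N) := by
  obtain ⟨N', hN'N, hinj, hN'⟩ :=
    exists_subset_injOn_image_eq_of_surjOn (N : Set G) (N.image π)
      (coe_image (f := π) ▸ Set.surjOn_image π N)
  rw [← hN', card_image_of_injOn hinj]
  refine (card_mul_iff.2 ?_).ge.trans (card_le_card (mul_subset_mul_left hN'N))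
  rintro ⟨r, n⟩ ⟨hr, hn⟩ ⟨r', n'⟩ ⟨hr', hn'⟩ h
  have hπn : π n = π n' := by
    have := congrArg π h
    rwa [hπ, hπ, hR r hr, hR r' hr', add_right_inj] at this
  have hnn' : n = n' := hinj hn hn' hπn
  subst hnn'
  exact Prod.ext (mul_right_cancel h) rfl

theorem card_mul_add_card_mul_le_card_mul (hπ : ∀ a b, π (a * b) = π a + π b) (A : Finset G)
    (v : V) :
    #({a ∈ A | π a ≠ v} * {a ∈ A | π a ≠ v}) +
      #({a ∈ A | π a = v} *
        {a ∈ A | v + π a ∉ (A.image π).erase v + (A.image π).erase v}) ≤ #(A * A) := by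
  rw [← card_union_of_disjoint]
  · exact card_le_card (union_subset (mul_subset_mul (filter_subset _ _) (filter_subset _ _))
      (mul_subset_mul (filter_subset _ _) (filter_subset _ _)))
  · rw [disjoint_left]
    intro _ h h'
    obtain ⟨x, hx, y, hy, rfl⟩ := mem_mul.1 h
    obtain ⟨r, hr, n, hn, hrn⟩ := mem_mul.1 h'
    simp only [mem_filter] at hx hy hr hn
    refine hn.2 (mem_add.2 ⟨π x, ?_, π y, ?_, ?_⟩)
    · exact mem_erase.2 ⟨hx.2, mem_image_of_mem π hx.1⟩
    · exact mem_erase.2 ⟨hy.2, mem_image_of_mem π hy.1⟩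
    · rw [← hπ, ← hrn, hπ, hr.2]

variable [LinearOrder 𝕜] [IsStrictOrderedRing 𝕜]

-- If `t` is `ℓ`-maximal with `b + t = y + z` in `B + B`, then `y` and `z` lie above `t`, so that
-- `t - b = (y - b) + (z - b)` is redundant: the irreducible `t` suffice to span.
theorem finrank_vectorSpan_insert_le_card_irreducible {ℓ : Module.Dual 𝕜 V} {b : V}
    {B : Finset V} (hb : ∀ t ∈ B, ℓ t < ℓ b) :
    Module.finrank 𝕜 (vectorSpan 𝕜 (insert b (B : Set V))) ≤ #{t ∈ B | b + t ∉ B + B} := by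
  classical
  set S : Finset V := {t ∈ B | b + t ∉ B + B}
  set W : Submodule 𝕜 V := Submodule.span 𝕜 (S.image (· - b))
  have sub_mem : ∀ t ∈ B, t - b ∈ W := by
    by_contra! h
    obtain ⟨t, ht, ht_max⟩ := exists_max_image {t ∈ B | t - b ∉ W} ℓ
      (h.imp fun t ht => mem_filter.2 ht)
    obtain ⟨htB, htW⟩ := mem_filter.1 ht
    have mem_of_lt (y) (hy : y ∈ B) (hlt : ℓ t < ℓ y) : y - b ∈ W := by
      by_contra hyW
      exact hlt.not_ge (ht_max y (mem_filter.2 ⟨hy, hyW⟩))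
    have htS : t ∉ S := fun htS => htW (Submodule.subset_span (mem_image_of_mem _ htS))
    have : b + t ∈ B + B := by
      by_contra hbt
      exact htS (mem_filter.2 ⟨htB, hbt⟩)
    obtain ⟨y, hy, z, hz, hyz⟩ := mem_add.1 this
    have hℓ : ℓ y + ℓ z = ℓ b + ℓ t := by rw [← map_add, hyz, map_add]
    have split : t - b = (y - b) + (z - b) := by
      rw [sub_add_sub_comm, hyz]
      abel
    refine htW (split ▸ W.add_mem (mem_of_lt y hy ?_) (mem_of_lt z hz ?_))
    · linarith [hb z hz]
    · linarith [hb y hy]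
  have vectorSpan_le : vectorSpan 𝕜 (insert b (B : Set V)) ≤ W := by
    rw [vectorSpan_eq_span_vsub_set_right 𝕜 (Set.mem_insert b _), Submodule.span_le]
    rintro _ ⟨t, rfl | ht, rfl⟩
    · simp
    · exact sub_mem t ht
  exact (Submodule.finrank_mono vectorSpan_le).trans
    ((finrank_span_finset_le_card _).trans card_image_le)

theorem exists_finrank_vectorSpan_lt_card_irreducible {S : Finset V}
    (hS : S.Nonempty) : ∃ b ∈ S, Module.finrank 𝕜 (vectorSpan 𝕜 (S : Set V)) <
      #{t ∈ S | b + t ∉ S.erase b + S.erase b} := by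
  obtain ⟨ℓ, hℓ⟩ := exists_dual_injOn (𝕜 := 𝕜) S
  obtain ⟨b, hb, hb_max⟩ := exists_max_image S ℓ hS
  have lt_of_mem (t) (ht : t ∈ S.erase b) : ℓ t < ℓ b :=
    (hb_max t (mem_of_mem_erase ht)).lt_of_ne (hℓ.ne (mem_of_mem_erase ht) hb (ne_of_mem_erase ht))
  have add_self : b + b ∉ S.erase b + S.erase b := by
    intro h
    obtain ⟨y, hy, z, hz, hyz⟩ := mem_add.1 h
    have hℓ : ℓ y + ℓ z = ℓ b + ℓ b := by rw [← map_add, hyz, map_add]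
    linarith [lt_of_mem y hy, lt_of_mem z hz]
  have irreducible_eq : {t ∈ S | b + t ∉ S.erase b + S.erase b} =
      insert b {t ∈ S.erase b | b + t ∉ S.erase b + S.erase b} := by
    conv_lhs => rw [← insert_erase hb]
    rw [filter_insert, if_pos (by rwa [erase_insert (notMem_erase b S)])]
    simp only [erase_insert (notMem_erase b S)]
  refine ⟨b, hb, ?_⟩
  rw [irreducible_eq, card_insert_of_notMem (by simp), Nat.lt_succ_iff, ← insert_erase hb,
    coe_insert]
  simpa using finrank_vectorSpan_insert_le_card_irreducible lt_of_mem

theorem card_mul_le_of_le_finrank [IsCancelMul G] (hπ : ∀ a b, π (a * b) = π a + π b) {m : ℕ}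
    (A : Finset G) (hm : ∀ v, #{a ∈ A | π a = v} ≤ m) {d : ℕ}
    (hd : d ≤ Module.finrank 𝕜 (vectorSpan 𝕜 (A.image π : Set V))) :
    2 * ((d + 1) * #A) ≤ 2 * #(A * A) + m * (d * (d + 1)) := by
  induction A using Finset.strongInduction generalizing d with
  | _ A ih =>
  rcases A.eq_empty_or_nonempty with rfl | hA
  · simp
  obtain ⟨b, hb, hdim⟩ := exists_finrank_vectorSpan_lt_card_irreducible (𝕜 := 𝕜) (hA.image π)
  set B := (A.image π).erase b
  set A' := {a ∈ A | π a ≠ b}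
  set R := {a ∈ A | π a = b}
  set N := {a ∈ A | b + π a ∉ B + B}
  have hRb (a) (ha : a ∈ R) : π a = b := (mem_filter.1 ha).2
  have hA'B : A'.image π = B := by
    rw [← filter_image (p := (· ≠ b)), filter_ne']
  have hsplit : #(A' * A') + #(R * N) ≤ #(A * A) := card_mul_add_card_mul_le_card_mul hπ A b
  have hcard : #R + #A' = #A := card_filter_add_card_filter_not _
  have hR : R.Nonempty := let ⟨a, ha, hab⟩ := mem_image.1 hb; ⟨a, mem_filter.2 ⟨ha, hab⟩⟩
  have hA'A : A' ⊂ A := let ⟨a, ha⟩ := hR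
    filter_ssubset.2 ⟨a, (mem_filter.1 ha).1, not_not.2 (hRb a ha)⟩
  have ih {e : ℕ} (he : e ≤ Module.finrank 𝕜 (vectorSpan 𝕜 (B : Set V))) :
      2 * ((e + 1) * #A') ≤ 2 * #(A' * A') + m * (e * (e + 1)) :=
    ih A' hA'A (fun v => (card_le_card (filter_subset_filter _ hA'A.subset)).trans (hm v))
      (hA'B ▸ he)
  rcases le_finrank_vectorSpan_erase_or hb hd with hdB | ⟨hd_eq, hbB⟩
  · have hRN : #R * (d + 1) ≤ #(R * N) := by
      refine le_trans (Nat.mul_le_mul_left _ ?_) (card_mul_card_image_le_card_mul hπ N hRb)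
      rw [← filter_image (p := (b + · ∉ B + B))]
      exact hd.trans_lt hdim
    nlinarith [ih hdB]
  · subst hd_eq
    have hN : N = A := filter_true_of_mem fun a ha => add_notMem_add_of_notMem_affineSpan hbB
      (or_iff_not_imp_left.2 fun hab => mem_erase.2 ⟨hab, mem_image_of_mem π ha⟩)
    have hRN : #A ≤ #(R * N) := hN ▸ card_le_card_mul_left hR
    nlinarith [ih le_rfl, hm b]

end FreimanLemma

section ValuationDominance

variable {R Γ₀ ι κ : Type*} [CommRing R] [LinearOrderedCommGroupWithZero Γ₀] (v : Valuation R Γ₀)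

theorem valuation_prod_one_add_sub_one_lt {s : Finset ι} {x : ι → R} {γ : Γ₀} (hγ0 : 0 < γ)
    (hγ1 : γ ≤ 1) (hx : ∀ i ∈ s, v (x i) < γ) : v (∏ i ∈ s, (1 + x i) - 1) < γ := by
  classical
  induction s using Finset.induction_on with
  | empty => simpa using hγ0
  | insert i s hi ih =>
    rw [forall_mem_insert] at hx
    have ih := ih hx.2
    rw [prod_insert hi, show (1 + x i) * ∏ j ∈ s, (1 + x j) - 1 =
      (∏ j ∈ s, (1 + x j) - 1) + (x i + x i * (∏ j ∈ s, (1 + x j) - 1)) by ring]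
    refine v.map_add_lt ih (v.map_add_lt hx.1 ?_)
    rw [map_mul]
    exact mul_lt_of_lt_of_le_one hx.1 (ih.le.trans hγ1)

theorem prod_one_add_ne_of_valuation_lt [Fintype ι] [Fintype κ] {x : ι → R} {y : κ → R} {i₀ : ι}
    (h0 : v (x i₀) ≠ 0) (h1 : v (x i₀) ≤ 1) (hx : ∀ i ≠ i₀, v (x i) < v (x i₀))
    (hy : ∀ j, v (y j) < v (x i₀)) : ∏ i, (1 + x i) ≠ ∏ j, (1 + y j) := by
  classical
  intro h
  have h0 := zero_lt_iff.2 h0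
  set P := ∏ i ∈ univ.erase i₀, (1 + x i)
  have hP : v (P - 1) < v (x i₀) :=
    valuation_prod_one_add_sub_one_lt v h0 h1 fun i hi => hx i (ne_of_mem_erase hi)
  have hQ : v (∏ j, (1 + y j) - 1) < v (x i₀) :=
    valuation_prod_one_add_sub_one_lt v h0 h1 fun j _ => hy j
  have hvP : v P = 1 := by
    rw [← add_sub_cancel 1 P, v.map_one_add_of_lt (hP.trans_le h1)]
  rw [← mul_prod_erase univ _ (mem_univ i₀)] at h
  have key : x i₀ * P = (∏ j, (1 + y j) - 1) - (P - 1) := by linear_combination h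
  refine (v.map_sub_lt hQ hP).ne ?_
  rw [← key, map_mul, hvP, mul_one]

theorem exists_valuation_eq_of_prod_one_add_eq [Fintype ι] [Nonempty ι] {x : ι ⊕ ι → R}
    (h0 : ∀ i, v (x i) ≠ 0) (h1 : ∀ i, v (x i) ≤ 1)
    (h : ∏ i, (1 + x (.inl i)) = ∏ i, (1 + x (.inr i))) :
    ∃ i j, i ≠ j ∧ v (x i) = v (x j) := by
  by_contra! hne
  obtain ⟨i₀, hi₀⟩ := Finite.exists_max fun i => v (x i)
  have hlt (i) (hi : i ≠ i₀) : v (x i) < v (x i₀) := (hi₀ i).lt_of_ne (hne i i₀ hi)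
  rcases i₀ with i₀ | i₀
  · exact prod_one_add_ne_of_valuation_lt v (x := x ∘ .inl) (h0 _) (h1 _)
      (fun i hi => hlt (.inl i) (Sum.inl_injective.ne hi)) (fun j => hlt _ Sum.inr_ne_inl) h
  · exact prod_one_add_ne_of_valuation_lt v (x := x ∘ .inr) (h0 _) (h1 _)
      (fun i hi => hlt (.inr i) (Sum.inr_injective.ne hi)) (fun j => hlt _ Sum.inl_ne_inr) h.symm

theorem valuation_prod_eq_of_prod_one_add_eq [Fintype ι] {x : ι ⊕ ι → R}
    (h1 : ∀ i, 1 < v (x i)) (h : ∏ i, (1 + x (.inl i)) = ∏ i, (1 + x (.inr i))) :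
    v (∏ i, x (.inl i)) = v (∏ i, x (.inr i)) := by
  have := congrArg v h
  simp only [map_prod] at this ⊢
  simpa only [v.map_add_eq_of_lt_right (v.map_one.trans_lt (h1 _))] using this

end ValuationDominance

theorem exists_valuation_eq_of_one_lt {F Γ₀ ι : Type*} [Field F]
    [LinearOrderedCommGroupWithZero Γ₀] (v : Valuation F Γ₀) [Fintype ι] [Nonempty ι]
    {x : ι ⊕ ι → F} (h1 : ∀ i, 1 < v (x i))
    (h : ∏ i, (1 + x (.inl i)) = ∏ i, (1 + x (.inr i)))
    (hx : ∏ i, x (.inl i) = ∏ i, x (.inr i)) : ∃ i j, i ≠ j ∧ v (x i) = v (x j) := by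
  have v_ne_zero (i) : v (x i) ≠ 0 := (zero_le_one.trans_lt (h1 i)).ne'
  have one_add_inv (i) : 1 + (x i)⁻¹ = (1 + x i) / x i := by
    rw [add_div, div_self (v.ne_zero_iff.1 (v_ne_zero i)), one_div, add_comm]
  obtain ⟨i, j, hij, h⟩ := exists_valuation_eq_of_prod_one_add_eq v (x := fun i => (x i)⁻¹)
    (fun i => by simpa only [map_inv₀] using inv_ne_zero (v_ne_zero i))
    (fun i => by simpa only [map_inv₀] using inv_le_one_of_one_le₀ (h1 i).le)
    (by simp only [one_add_inv, prod_div_distrib, h, hx])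
  exact ⟨i, j, hij, by simpa only [map_inv₀, inv_inj] using h⟩

section Coordinates

variable {ι 𝕜 : Type*} [Field 𝕜]

/-- A vector of `W` all of whose coordinates in `P` vanish is zero, so `P` picks out a set of
coordinates on the subspace `W` of `ι → 𝕜`. -/
def SeparatesCoordinates (P : Finset ι) (W : Submodule 𝕜 (ι → 𝕜)) : Prop :=
  ∀ w ∈ W, (∀ p ∈ P, w p = 0) → w = 0

theorem exists_separatesCoordinates_card_le_finrank (W : Submodule 𝕜 (ι → 𝕜))
    [FiniteDimensional 𝕜 W] :
    ∃ P : Finset ι, #P ≤ Module.finrank 𝕜 W ∧ SeparatesCoordinates P W := by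
  classical
  induction hd : Module.finrank 𝕜 W using Nat.strong_induction_on generalizing W with
  | _ d ih =>
  by_cases hW : W = ⊥
  · exact ⟨∅, Nat.zero_le _, fun w hw _ => (Submodule.mem_bot 𝕜).1 (hW ▸ hw)⟩
  obtain ⟨w, hw, hw0⟩ := Submodule.exists_mem_ne_zero_of_ne_bot hW
  obtain ⟨p, hp⟩ := Function.ne_iff.1 hw0
  let U : Submodule 𝕜 (ι → 𝕜) := W ⊓ LinearMap.ker (LinearMap.proj p)
  have hUW : U < W := inf_lt_left.2 fun h => hp (h hw)
  have : FiniteDimensional 𝕜 U := Submodule.finiteDimensional_of_le hUW.le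
  have finrank_lt := Submodule.finrank_lt_finrank_of_lt hUW
  obtain ⟨P, hPU, hP⟩ := ih _ (hd ▸ finrank_lt) U rfl
  refine ⟨insert p P, (card_insert_le _ _).trans (by lia), fun x hx hx0 => ?_⟩
  rw [forall_mem_insert] at hx0
  exact hP x ⟨hx, hx0.1⟩ hx0.2

theorem SeparatesCoordinates.mono {P : Finset ι} {W W' : Submodule 𝕜 (ι → 𝕜)}
    (h : SeparatesCoordinates P W) (hW : W' ≤ W) : SeparatesCoordinates P W' :=
  fun w hw => h w (hW hw)

theorem SeparatesCoordinates.erase_vectorSpan [DecidableEq ι] {P : Finset ι} {S : Set (ι → 𝕜)}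
    (h : SeparatesCoordinates P (vectorSpan 𝕜 S)) {p : ι} {t : 𝕜} (hp : ∀ w ∈ S, w p = t) :
    SeparatesCoordinates (P.erase p) (vectorSpan 𝕜 S) := by
  have vectorSpan_le : vectorSpan 𝕜 S ≤ LinearMap.ker (LinearMap.proj p) := by
    rw [vectorSpan_def, Submodule.span_le]
    rintro _ ⟨x, hx, y, hy, rfl⟩
    simp [hp x hx, hp y hy]
  refine fun w hw h0 => h w hw fun q hq => ?_
  rcases eq_or_ne q p with rfl | hqp
  exacts [vectorSpan_le hw, h0 q (mem_erase.2 ⟨hqp, hq⟩)]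

end Coordinates

section ValuationVector

/-- The valuations of a nonzero rational at all the primes, as a vector: multiplicative relations
between rationals become linear relations between their vectors. The entries are taken in `ℚ` rather
than `ℤ` to have subspaces and dimensions at hand. -/
def valVec (a : ℚˣ) (p : Nat.Primes) : ℚ := padicValRat p a

instance (p : Nat.Primes) : Fact (p : ℕ).Prime := ⟨p.2⟩

theorem valVec_mul (a b : ℚˣ) : valVec (a * b) = valVec a + valVec b := by
  ext p
  simp [valVec, padicValRat.mul a.ne_zero b.ne_zero]

theorem valVec_prod {ι : Type*} (s : Finset ι) (x : ι → ℚˣ) :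
    valVec (∏ i ∈ s, x i) = ∑ i ∈ s, valVec (x i) := by
  classical
  induction s using Finset.induction_on with
  | empty =>
    ext p
    simp [valVec]
  | insert i s hi ih => rw [prod_insert hi, sum_insert hi, valVec_mul, ih]

theorem abs_eq_one_of_valVec_eq_zero {a : ℚˣ} (h : valVec a = 0) : |(a : ℚ)| = 1 := by
  have natAbs_num_eq : (a : ℚ).num.natAbs = (a : ℚ).den := by
    refine (Nat.eq_iff_prime_padicValNat_eq _ _ (by simp) (a : ℚ).den_nz).2 fun p hp => ?_
    have h : (padicValRat p a : ℚ) = 0 := congrFun h ⟨p, hp⟩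
    rw [Int.cast_eq_zero, padicValRat, padicValInt, sub_eq_zero] at h
    exact_mod_cast h
  rw [Rat.abs_def, natAbs_num_eq, Rat.divInt_self']
  exact_mod_cast (a : ℚ).den_nz

theorem eq_of_valVec_eq_of_sign_eq {a b : ℚˣ} (h : valVec a = valVec b)
    (hs : SignType.sign (a : ℚ) = SignType.sign (b : ℚ)) : a = b := by
  have valVec_div : valVec (a / b) = 0 := by
    have := valVec_mul (a / b) b
    rwa [div_mul_cancel, h, right_eq_add] at this
  have := abs_eq_one_of_valVec_eq_zero valVec_div
  rw [Units.val_div_eq_div_val, abs_div, div_eq_one_iff_eq (by simp)] at this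
  rw [← Units.val_inj, ← sign_mul_abs (a : ℚ), hs, this, sign_mul_abs]

open scoped Classical in
theorem card_filter_valVec_eq_le_two (A : Finset ℚˣ) (v : Nat.Primes → ℚ) :
    #{a ∈ A | valVec a = v} ≤ 2 := by
  refine (card_le_card_of_injOn (t := {1, -1}) (fun a : ℚˣ => SignType.sign (a : ℚ))
    (fun a _ => ?_) fun a ha b hb hab => ?_).trans card_le_two
  · rcases a.ne_zero.lt_or_gt with h | h <;> simp [h]
  · rw [mem_coe, mem_filter] at ha hb
    exact eq_of_valVec_eq_of_sign_eq (ha.2.trans hb.2.symm) hab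

theorem exists_separatesCoordinates_of_card_mul_le {A : Finset ℚˣ} {K : ℕ}
    (hAA : #(A * A) ≤ K * #A) (hA : K * (K + 1) < #A) :
    ∃ P : Finset Nat.Primes, #P < K ∧
      SeparatesCoordinates P (vectorSpan ℚ (valVec '' (A : Set ℚˣ))) := by
  classical
  have : FiniteDimensional ℚ (vectorSpan ℚ (valVec '' (A : Set ℚˣ))) :=
    finiteDimensional_vectorSpan_of_finite ℚ (A.finite_toSet.image _)
  obtain ⟨P, hP, hsep⟩ := exists_separatesCoordinates_card_le_finrank
    (vectorSpan ℚ (valVec '' (A : Set ℚˣ)))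
  refine ⟨P, hP.trans_lt ?_, hsep⟩
  by_contra! hK
  rw [← coe_image] at hK
  have := card_mul_le_of_le_finrank valVec_mul A (card_filter_valVec_eq_le_two A) hK
  nlinarith

theorem padicValuation_coe_units (p : Nat.Primes) (a : ℚˣ) :
    Rat.padicValuation p (a : ℚ) = WithZero.exp (-padicValRat p a) :=
  if_neg a.ne_zero

theorem padicValuation_eq_iff {p : Nat.Primes} {a b : ℚˣ} :
    Rat.padicValuation p (a : ℚ) = Rat.padicValuation p (b : ℚ) ↔ valVec a p = valVec b p := by
  simp [padicValuation_coe_units, valVec]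

theorem padicValuation_le_one_iff {p : Nat.Primes} {a : ℚˣ} :
    Rat.padicValuation p (a : ℚ) ≤ 1 ↔ 0 ≤ valVec a p := by
  simp [padicValuation_coe_units, valVec, ← WithZero.exp_zero, -WithZero.exp_neg]

end ValuationVector

section ShiftedEnergy

variable {ι : Type*} [Fintype ι]

-- At `p ∈ P`, `1 + a` and `a` have the same valuation, so the equation determines the coordinates
-- in `P` of `∑ i, valVec (x i)`.
theorem prod_eq_prod_of_valVec_neg {X : Finset ℚˣ} {P : Finset Nat.Primes}
    (hP : SeparatesCoordinates P (vectorSpan ℚ (valVec '' (X : Set ℚˣ))))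
    (hsign : ∀ a ∈ X, ∀ b ∈ X, SignType.sign (a : ℚ) = SignType.sign (b : ℚ))
    (hneg : ∀ p ∈ P, ∀ a ∈ X, valVec a p < 0) {x : ι ⊕ ι → ℚˣ} (hx : ∀ i, x i ∈ X)
    (h : ∏ i, (1 + x (.inl i) : ℚ) = ∏ i, (1 + x (.inr i) : ℚ)) :
    ∏ i, x (.inl i) = ∏ i, x (.inr i) := by
  refine eq_of_valVec_eq_of_sign_eq (sub_eq_zero.1 (hP _ ?_ fun p hp => ?_)) ?_
  · rw [valVec_prod, valVec_prod, ← sum_sub_distrib]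
    exact Submodule.sum_mem _ fun i _ => vsub_mem_vectorSpan ℚ
      (Set.mem_image_of_mem _ (hx _)) (Set.mem_image_of_mem _ (hx _))
  · rw [Pi.sub_apply, sub_eq_zero, ← padicValuation_eq_iff, Units.coe_prod, Units.coe_prod]
    exact valuation_prod_eq_of_prod_one_add_eq _ (x := fun i => (x i : ℚ)) (fun i =>
      lt_of_not_ge fun h => (padicValuation_le_one_iff.1 h).not_gt (hneg p hp _ (hx i))) h
  · rw [Units.coe_prod, Units.coe_prod]
    change signHom _ = signHom _
    rw [map_prod, map_prod]
    exact prod_congr rfl fun i _ => hsign _ (hx _) _ (hx _)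

theorem card_le_one_of_separatesCoordinates_empty {X : Finset ℚˣ}
    (hP : SeparatesCoordinates ∅ (vectorSpan ℚ (valVec '' (X : Set ℚˣ))))
    (hsign : ∀ a ∈ X, ∀ b ∈ X, SignType.sign (a : ℚ) = SignType.sign (b : ℚ)) : #X ≤ 1 :=
  card_le_one.2 fun a ha b hb => eq_of_valVec_eq_of_sign_eq
    (sub_eq_zero.1 (hP _ (vsub_mem_vectorSpan ℚ (Set.mem_image_of_mem _ ha)
      (Set.mem_image_of_mem _ hb)) fun p hp => absurd hp (notMem_empty p)))
    (hsign a ha b hb)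

variable [Nonempty ι]

theorem exists_valVec_eq_of_nonneg {x : ι ⊕ ι → ℚˣ} {p : Nat.Primes}
    (hp : ∀ i, 0 ≤ valVec (x i) p)
    (h : ∏ i, (1 + x (.inl i) : ℚ) = ∏ i, (1 + x (.inr i) : ℚ)) :
    ∃ i j, i ≠ j ∧ valVec (x i) p = valVec (x j) p := by
  simp only [← padicValuation_eq_iff]
  exact exists_valuation_eq_of_prod_one_add_eq _ (x := fun i => (x i : ℚ))
    (fun i => (Valuation.ne_zero_iff _).2 (x i).ne_zero)
    (fun i => padicValuation_le_one_iff.2 (hp i)) h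

theorem exists_valVec_eq_of_neg {x : ι ⊕ ι → ℚˣ} {p : Nat.Primes} (hp : ∀ i, valVec (x i) p < 0)
    (h : ∏ i, (1 + x (.inl i) : ℚ) = ∏ i, (1 + x (.inr i) : ℚ))
    (hx : ∏ i, x (.inl i) = ∏ i, x (.inr i)) :
    ∃ i j, i ≠ j ∧ valVec (x i) p = valVec (x j) p := by
  simp only [← padicValuation_eq_iff]
  refine exists_valuation_eq_of_one_lt _ (x := fun i => (x i : ℚ))
    (fun i => lt_of_not_ge fun h => (padicValuation_le_one_iff.1 h).not_gt (hp i)) h ?_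
  exact_mod_cast congrArg Units.val hx

theorem exists_prime_valVec_repeat [DecidableEq ι] {X : Finset ℚˣ} {P : Finset Nat.Primes}
    (hPne : P.Nonempty)
    (hP : SeparatesCoordinates P (vectorSpan ℚ (valVec '' (X : Set ℚˣ))))
    (hsign : ∀ a ∈ X, ∀ b ∈ X, SignType.sign (a : ℚ) = SignType.sign (b : ℚ))
    (hval : ∀ p ∈ P, (∀ a ∈ X, 0 ≤ valVec a p) ∨ ∀ a ∈ X, valVec a p < 0) :
    ∃ p ∈ P, ∀ x ∈ prodSolutions (fun a : ℚˣ => (1 + a : ℚ)) fun _ : ι ⊕ ι => X,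
      ∃ i j, i ≠ j ∧ valVec (x i) p = valVec (x j) p := by
  by_cases hpos : ∃ p ∈ P, ∀ a ∈ X, 0 ≤ valVec a p
  · obtain ⟨p, hp, hpX⟩ := hpos
    refine ⟨p, hp, fun x hx => ?_⟩
    obtain ⟨hxX, hxf⟩ := mem_prodSolutions.1 hx
    exact exists_valVec_eq_of_nonneg (fun i => hpX _ (hxX i)) hxf
  · have hneg (p) (hp : p ∈ P) : ∀ a ∈ X, valVec a p < 0 :=
      (hval p hp).resolve_left fun h => hpos ⟨p, hp, h⟩
    obtain ⟨p, hp⟩ := hPne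
    refine ⟨p, hp, fun x hx => ?_⟩
    obtain ⟨hxX, hxf⟩ := mem_prodSolutions.1 hx
    exact exists_valVec_eq_of_neg (fun i => hneg p hp _ (hxX i)) hxf
      (prod_eq_prod_of_valVec_neg hP hsign hneg hxX hxf)

theorem sq_prodNorm_one_add_le_of_sign_constant [DecidableEq ι] {X : Finset ℚˣ}
    {P : Finset Nat.Primes}
    (hX : ∀ a ∈ X, IsUnit (1 + a : ℚ))
    (hP : SeparatesCoordinates P (vectorSpan ℚ (valVec '' (X : Set ℚˣ))))
    (hsign : ∀ a ∈ X, ∀ b ∈ X, SignType.sign (a : ℚ) = SignType.sign (b : ℚ))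
    (hval : ∀ p ∈ P, (∀ a ∈ X, 0 ≤ valVec a p) ∨ ∀ a ∈ X, valVec a p < 0) :
    prodNorm ι (fun a : ℚˣ => (1 + a : ℚ)) X ^ 2 ≤
      ((Fintype.card (ι ⊕ ι)).choose 2 : ℝ) ^ #P * #X := by
  induction P using Finset.strongInduction generalizing X with
  | _ P ih =>
  rcases P.eq_empty_or_nonempty with rfl | hPne
  · have hX1 := card_le_one_of_separatesCoordinates_empty hP hsign
    calc prodNorm ι (fun a : ℚˣ => (1 + a : ℚ)) X ^ 2 ≤ (#X : ℝ) ^ 2 :=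
          pow_le_pow_left₀ (prodNorm_nonneg _ _) (prodNorm_le_card _ _) 2
      _ ≤ #X := pow_le_of_le_one (Nat.cast_nonneg _) (by exact_mod_cast hX1) two_ne_zero
      _ = _ := by rw [card_empty, pow_zero, one_mul]
  obtain ⟨p, hp, hrepeat⟩ := exists_prime_valVec_repeat (ι := ι) hPne hP hsign hval
  set C : ℝ := ((Fintype.card (ι ⊕ ι)).choose 2 : ℝ)
  have hfiber (t : ℚ) : prodNorm ι (fun a : ℚˣ => (1 + a : ℚ)) {a ∈ X | valVec a p = t} ^ 2 ≤
      C ^ (#P - 1) * #{a ∈ X | valVec a p = t} := by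
    have hsub : {a ∈ X | valVec a p = t} ⊆ X := filter_subset _ _
    rw [← card_erase_of_mem hp]
    refine ih _ (erase_ssubset hp) (fun a ha => hX a (hsub ha)) ?_
      (fun a ha b hb => hsign a (hsub ha) b (hsub hb)) fun q hq =>
        (hval q (mem_of_mem_erase hq)).imp (fun h a ha => h a (hsub ha)) fun h a ha => h a (hsub ha)
    refine (hP.mono (vectorSpan_mono ℚ (Set.image_mono (coe_subset.2 hsub)))).erase_vectorSpan
      (t := t) ?_
    rintro _ ⟨a, ha, rfl⟩
    exact (mem_filter.1 ha).2
  calc prodNorm ι (fun a : ℚˣ => (1 + a : ℚ)) X ^ 2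
      ≤ C * ∑ t ∈ X.image (valVec · p),
          prodNorm ι (fun a : ℚˣ => (1 + a : ℚ)) {a ∈ X | valVec a p = t} ^ 2 :=
        sq_prodNorm_le_of_repeat hX (valVec · p) hrepeat
    _ ≤ C * ∑ t ∈ X.image (valVec · p), C ^ (#P - 1) * #{a ∈ X | valVec a p = t} := by
        gcongr with t
        exact hfiber t
    _ = C ^ #P * #X := by
        rw [← mul_sum, ← mul_assoc, mul_pow_sub_one hPne.card_ne_zero,
          card_eq_sum_card_image (valVec · p) X, Nat.cast_sum]

theorem sq_prodNorm_one_add_le [DecidableEq ι] {A : Finset ℚˣ} {P : Finset Nat.Primes}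
    (hA : ∀ a ∈ A, IsUnit (1 + a : ℚ))
    (hP : SeparatesCoordinates P (vectorSpan ℚ (valVec '' (A : Set ℚˣ)))) :
    prodNorm ι (fun a : ℚˣ => (1 + a : ℚ)) A ^ 2 ≤
      3 * (2 * (Fintype.card (ι ⊕ ι)).choose 2 : ℝ) ^ #P * #A := by
  set C : ℝ := ((Fintype.card (ι ⊕ ι)).choose 2 : ℝ)
  let φ (a : ℚˣ) : SignType × Finset Nat.Primes :=
    (SignType.sign (a : ℚ), {p ∈ P | valVec a p < 0})
  have hfiber (t) : prodNorm ι (fun a : ℚˣ => (1 + a : ℚ)) {a ∈ A | φ a = t} ^ 2 ≤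
      C ^ #P * #{a ∈ A | φ a = t} := by
    have hsub : {a ∈ A | φ a = t} ⊆ A := filter_subset _ _
    have hφ {a} (ha : a ∈ ({a ∈ A | φ a = t} : Finset ℚˣ)) : φ a = t := (mem_filter.1 ha).2
    refine sq_prodNorm_one_add_le_of_sign_constant (fun a ha => hA a (hsub ha))
      (hP.mono (vectorSpan_mono ℚ (Set.image_mono (coe_subset.2 hsub))))
      (fun a ha b hb => congrArg Prod.fst ((hφ ha).trans (hφ hb).symm)) fun p hp => ?_
    have neg_iff (a) (ha : a ∈ ({a ∈ A | φ a = t} : Finset ℚˣ)) : valVec a p < 0 ↔ p ∈ t.2 := by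
      simp [← hφ ha, φ, hp]
    by_cases hpt : p ∈ t.2
    · exact .inr fun a ha => (neg_iff a ha).2 hpt
    · exact .inl fun a ha => not_lt.1 fun h => hpt ((neg_iff a ha).1 h)
  have card_image_le : (#(A.image φ) : ℝ) ≤ 3 * 2 ^ #P := by
    have : #(A.image φ) ≤ #((univ : Finset SignType) ×ˢ P.powerset) :=
      card_le_card (image_subset_iff.2 fun a _ =>
        mem_product.2 ⟨mem_univ _, mem_powerset.2 (filter_subset _ _)⟩)
    rw [card_product, card_powerset] at this
    exact_mod_cast this
  calc prodNorm ι (fun a : ℚˣ => (1 + a : ℚ)) A ^ 2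
      ≤ (∑ t ∈ A.image φ, prodNorm ι (fun a : ℚˣ => (1 + a : ℚ)) {a ∈ A | φ a = t}) ^ 2 :=
        pow_le_pow_left₀ (prodNorm_nonneg _ _) (prodNorm_le_sum_fiber hA φ) 2
    _ ≤ #(A.image φ) * ∑ t ∈ A.image φ,
          prodNorm ι (fun a : ℚˣ => (1 + a : ℚ)) {a ∈ A | φ a = t} ^ 2 :=
        sq_sum_le_card_mul_sum_sq
    _ ≤ (3 * 2 ^ #P) * ∑ t ∈ A.image φ, C ^ #P * #{a ∈ A | φ a = t} := by
        gcongr with t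
        exact hfiber t
    _ = 3 * (2 * C) ^ #P * #A := by
        rw [← mul_sum, ← Nat.cast_sum, ← card_eq_sum_card_image, mul_pow]
        ring

theorem sq_prodNorm_one_add_le_of_card_mul_le [DecidableEq ι] {A : Finset ℚˣ}
    (hA : ∀ a ∈ A, IsUnit (1 + a : ℚ)) {K : ℕ} (hAA : #(A * A) ≤ K * #A) :
    prodNorm ι (fun a : ℚˣ => (1 + a : ℚ)) A ^ 2 ≤
      ((Fintype.card (ι ⊕ ι) : ℝ) ^ 2) ^ K * #A := by
  set n := Fintype.card (ι ⊕ ι)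
  have four_le : (4 : ℝ) ≤ (n : ℝ) ^ 2 := by
    have : 1 ≤ Fintype.card ι := Fintype.card_pos
    have : 2 ≤ n := by simpa only [n, Fintype.card_sum] using by lia
    exact_mod_cast Nat.pow_le_pow_left this 2
  rcases le_or_gt #A (K * (K + 1)) with hsmall | hlarge
  · have card_le_pow : #A ≤ 4 ^ K := calc
      #A ≤ K * (K + 1) := hsmall
      _ ≤ 2 ^ K * 2 ^ K := Nat.mul_le_mul K.lt_two_pow_self.le K.lt_two_pow_self
      _ = 4 ^ K := (mul_pow 2 2 K).symm
    calc prodNorm ι (fun a : ℚˣ => (1 + a : ℚ)) A ^ 2 ≤ #A * #A := by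
          rw [← sq]
          exact pow_le_pow_left₀ (prodNorm_nonneg _ _) (prodNorm_le_card _ _) 2
      _ ≤ 4 ^ K * #A := by
          gcongr
          exact_mod_cast card_le_pow
      _ ≤ ((n : ℝ) ^ 2) ^ K * #A := by gcongr
  · obtain ⟨P, hPK, hP⟩ := exists_separatesCoordinates_of_card_mul_le hAA hlarge
    have choose_le : (2 * n.choose 2 : ℝ) ≤ (n : ℝ) ^ 2 := by
      have := Nat.choose_le_pow_div (α := ℝ) 2 n
      rw [Nat.factorial_two] at this
      push_cast at this
      linarith
    calc prodNorm ι (fun a : ℚˣ => (1 + a : ℚ)) A ^ 2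
        ≤ 3 * (2 * n.choose 2 : ℝ) ^ #P * #A := sq_prodNorm_one_add_le hA hP
      _ ≤ (n : ℝ) ^ 2 * ((n : ℝ) ^ 2) ^ #P * #A := by
          gcongr
          linarith
      _ ≤ ((n : ℝ) ^ 2) ^ K * #A := by
          rw [← pow_succ']
          gcongr
          · linarith
          · exact hPK

theorem card_pow_le_card_image_prod_one_add [DecidableEq ι] {A : Finset ℚˣ}
    (hA : ∀ a ∈ A, IsUnit (1 + a : ℚ)) {K : ℕ} (hAA : #(A * A) ≤ K * #A) :
    (#A : ℝ) ^ Fintype.card ι ≤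
      #((Fintype.piFinset fun _ : ι => A).image fun y => ∏ i, (1 + y i : ℚ)) *
        ((Fintype.card (ι ⊕ ι) : ℝ) ^ 2) ^ (Fintype.card ι * K) := by
  rcases A.eq_empty_or_nonempty with rfl | hne
  · simp
  set I := (Fintype.piFinset fun _ : ι => A).image fun y => ∏ i, (1 + y i : ℚ)
  set k := Fintype.card ι
  set n := Fintype.card (ι ⊕ ι)
  have hn : n = 2 * k := by rw [two_mul]; exact Fintype.card_sum
  have card_pos : (0 : ℝ) < #A := Nat.cast_pos.2 hne.card_pos
  refine le_of_mul_le_mul_right ?_ (pow_pos card_pos k)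
  calc (#A : ℝ) ^ k * #A ^ k = #A ^ n := by rw [hn, two_mul, pow_add]
    _ ≤ #I * prodNorm ι (fun a : ℚˣ => (1 + a : ℚ)) A ^ n := by
        rw [prodNorm_pow]
        exact_mod_cast card_pow_le_card_image_mul_card_prodSolutions (fun a : ℚˣ => (1 + a : ℚ)) A
    _ = #I * (prodNorm ι (fun a : ℚˣ => (1 + a : ℚ)) A ^ 2) ^ k := by rw [hn, pow_mul]
    _ ≤ #I * (((n : ℝ) ^ 2) ^ K * #A) ^ k := by
        gcongr
        exact sq_prodNorm_one_add_le_of_card_mul_le hA hAA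
    _ = #I * ((n : ℝ) ^ 2) ^ (k * K) * #A ^ k := by
        rw [mul_pow, ← pow_mul, mul_comm K k, mul_assoc]

end ShiftedEnergy

theorem kfoldProd_image {α : Type*} (k : ℕ) (A : Finset α) (f : α → ℚ) :
    kfoldProd k (A.image f) =
      (Fintype.piFinset fun _ : Fin k => A).image fun y => ∏ i, f (y i) := by
  rw [kfoldProd, Fintype.piFinset_image (fun _ : Fin k => f) (fun _ => A), image_image]
  rfl

theorem product_of_shift_lower_bound_general
    (A : Finset ℚ) (hA0 : (0 : ℚ) ∉ A) (hA1 : (-1 : ℚ) ∉ A)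
    (K : ℕ) (hAA : (A * A).card ≤ K * A.card) (k : ℕ) :
    (A.card : ℝ) ^ k / (4 * (k : ℝ) ^ 2) ^ (k * K) ≤
      ((kfoldProd k (A.image fun a => a + 1)).card : ℝ) := by
  rcases k.eq_zero_or_pos with rfl | hk
  · simp [kfoldProd]
  have : NeZero k := ⟨hk.ne'⟩
  have isUnit_one_add (a) (ha : a ∈ A) : IsUnit (1 + a) :=
    isUnit_iff_ne_zero.2 fun h => hA1 (neg_eq_of_add_eq_zero_right h ▸ ha)
  lift A to Finset ℚˣ using fun a ha => isUnit_iff_ne_zero.2 (ne_of_mem_of_not_mem ha hA0)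
  have image_val_mul : A.image Units.val * A.image Units.val = (A * A).image Units.val :=
    (image_mul (Units.coeHom ℚ)).symm
  rw [image_val_mul, card_image_of_injective _ Units.val_injective,
    card_image_of_injective _ Units.val_injective] at hAA
  rw [card_image_of_injective _ Units.val_injective, image_image, kfoldProd_image]
  have h := card_pow_le_card_image_prod_one_add (ι := Fin k)
    (fun a ha => isUnit_one_add a (mem_image_of_mem _ ha)) hAA
  simp only [Fintype.card_sum, Fintype.card_fin] at h
  have base_eq : 4 * (k : ℝ) ^ 2 = ((k + k : ℕ) : ℝ) ^ 2 := by
    push_cast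
    ring
  rw [base_eq, div_le_iff₀ (by positivity)]
  simpa only [Function.comp_apply, add_comm] using h

theorem product_of_shift_lower_bound
    (A : Finset ℚ) (hA0 : (0 : ℚ) ∉ A) (hA1 : (-1 : ℚ) ∉ A)
    (K : ℕ) (hK : 0 < K) (hAA : (A * A).card ≤ K * A.card)
    (k : ℕ) (hk : 2 ≤ k) :
    (A.card : ℝ) ^ k / (8 * (k : ℝ) ^ 4) ^ (k * K) ≤
      ((kfoldProd k (A.image fun a => a + 1)).card : ℝ) := by
  refine le_trans ?_ (product_of_shift_lower_bound_general A hA0 hA1 K hAA k)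
  have : (1 : ℝ) ≤ (k : ℝ) := by exact_mod_cast one_le_two.trans hk
  gcongr <;> norm_num
end

section
/- Let K and k be positive integers with k ≥ 2. There exists N = N(K) such that the following holds. Let A be a finite set of positive integers with |A| ≥ N and |AA| ≤ K|A|, and let u be a nonzero integer coprime to every element of A and with -u ∉ A. Then the k-fold product set of the shift A+u satisfies |(A+u)^{(k)}| ≥ |A|^k / (2k^2)^{kK}. -/
open Finset Pointwise

/-- The `k`-fold product set of a finite set `B` of integers:
`B^(k) = {b₁ ⋯ b_k : bᵢ ∈ B}`. -/
def kfoldProdInt (k : ℕ) (B : Finset ℤ) : Finset ℤ :=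
  (Fintype.piFinset fun _ : Fin k => B).image fun f => ∏ i, f i

/-!
Map an integer to the vector of exponents in its prime factorization, and let the multiplicative
dimension of `A` be the dimension of the affine span of the image. Freiman's lemma shows that
`|AA| ≤ K|A|` forces this dimension below `K` once `A` is large. By Cauchy–Schwarz it then suffices
to bound the number of solutions of `∏ (xᵢ + u) = ∏ (yᵢ + u)` in `A` in terms of the dimension.

Take a prime `p` whose valuation is not constant on `A`; it divides an element of `A`, hence not
`u`. In any solution the least `p`-adic valuation of a variable `xᵢ` or `yᵢ` is attained twice: if
only one variable had valuation `m`, the equation modulo `p ^ (m + 1)` would force it to vanish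
there. So two of the `2k` variables lie in the same fiber of the valuation. The `2k`-th root `N` of
the number of solutions satisfies Hölder's inequality, being an `L^{2k}` norm of a sum over
Dirichlet characters modulo a large prime, and therefore `N(A)² ≤ C(2k, 2) ∑ N(A_j)²` over the
fibers `A_j`. Each fiber has smaller dimension, and iterating gives
`N(A)² ≤ C(2k, 2) ^ dim A * |A|`, where `C(2k, 2) ≤ 2k²`.
-/

section Freiman

open Module

theorem card_add_self_add_card_lt_card_insert_add_insert {V : Type*} [AddCommMonoid V]
    [LinearOrder V] [IsOrderedCancelAddMonoid V] {a : V} {s t : Finset V} (ha : ∀ x ∈ s, x < a)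
    (hts : t ⊆ s) (ht : ∀ b ∈ t, a + b ∉ s + s) :
    #(s + s) + #t < #(insert a s + insert a s) := by
  have hat : a ∉ t := fun hat => (ha a (hts hat)).false
  have haa : a + a ∉ s + s := fun h => by
    obtain ⟨x, hx, y, hy, hxy⟩ := mem_add.mp h
    exact (add_lt_add (ha x hx) (ha y hy)).ne hxy
  have hnew : Disjoint (s + s) ((insert a t).image (a + ·)) := by
    simpa [disjoint_right, haa] using ht
  calc #(s + s) + #t < #(s + s) + #((insert a t).image (a + ·)) := by
        rw [card_image_of_injective _ (add_right_injective a), card_insert_of_notMem hat]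
        lia
    _ = #((s + s) ∪ (insert a t).image (a + ·)) := (card_union_of_disjoint hnew).symm
    _ ≤ #(insert a s + insert a s) := card_le_card <| union_subset
        (add_subset_add (subset_insert a s) (subset_insert a s)) <| image_subset_iff.mpr
          fun b hb => add_mem_add (mem_insert_self a s) (insert_subset_insert a hts hb)

theorem add_notMem_add_self_of_notMem_affineSpan {𝕜 V : Type*} [Ring 𝕜] [AddCommGroup V]
    [Module 𝕜 V] [DecidableEq V] {a b : V} {s : Finset V} (ha : a ∉ affineSpan 𝕜 (s : Set V))
    (hb : b ∈ s) : a + b ∉ s + s := by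
  intro h
  obtain ⟨c, hc, d, hd, hcd⟩ := mem_add.mp h
  have hac : a = (c - b) +ᵥ d := by
    rw [vadd_eq_add, sub_add_eq_add_sub, hcd, add_sub_cancel_right]
  rw [hac] at ha
  exact ha <| AffineSubspace.vadd_mem_of_mem_direction
    (AffineSubspace.vsub_mem_direction (subset_affineSpan 𝕜 _ hc) (subset_affineSpan 𝕜 _ hb))
    (subset_affineSpan 𝕜 _ hd)

variable {𝕜 V : Type*} [DivisionRing 𝕜] [AddCommGroup V] [Module 𝕜 V]

section LinearOrder

variable [LinearOrder V] [IsOrderedAddMonoid V]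

/- If `b` is the largest element of `s` for which `b - a` is not in the span, then `a + b = c + d`
with `c, d ∈ s` forces `c, d > b`, so that `b - a = (c - a) + (d - a)` is in the span after all. -/
theorem vectorSpan_insert_le_span {a : V} {s : Finset V} (ha : ∀ x ∈ s, x < a) :
    vectorSpan 𝕜 (insert a s : Set V) ≤
      Submodule.span 𝕜 ({b ∈ s | a + b ∉ s + s}.image (· - a) : Finset V) := by
  classical
  set W := Submodule.span 𝕜 (({b ∈ s | a + b ∉ s + s}.image (· - a) : Finset V) : Set V)
  have hW : ∀ b ∈ s, b - a ∈ W := by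
    by_contra! ⟨x, hx, hxW⟩
    obtain ⟨b, hb, hmax⟩ := exists_max_image {b ∈ s | b - a ∉ W} id
      ⟨x, mem_filter.mpr ⟨hx, hxW⟩⟩
    rw [mem_filter] at hb
    have hlt : ∀ c ∈ s, b < c → c - a ∈ W := fun c hc hbc => by
      by_contra hcW
      exact hbc.not_ge (hmax c (mem_filter.mpr ⟨hc, hcW⟩))
    have hab : a + b ∈ s + s := by
      by_contra hab
      exact hb.2 <| Submodule.subset_span <| mem_coe.mpr <| mem_image_of_mem _ <|
        mem_filter.mpr ⟨hb.1, hab⟩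
    obtain ⟨c, hc, d, hd, hcd⟩ := mem_add.mp hab
    have hbc : b < c := not_le.mp fun h =>
      (add_lt_add_of_le_of_lt h (ha d hd)).ne (hcd.trans (add_comm a b))
    have hbd : b < d := not_le.mp fun h => (add_lt_add_of_lt_of_le (ha c hc) h).ne hcd
    have hba : b - a = (c - a) + (d - a) := by rw [sub_add_sub_comm, hcd]; abel
    exact hb.2 (hba ▸ W.add_mem (hlt c hc hbc) (hlt d hd hbd))
  rw [vectorSpan_eq_span_vsub_set_right 𝕜 (Set.mem_insert a _), Submodule.span_le]
  rintro _ ⟨b, rfl | hb, rfl⟩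
  · simp
  · exact hW b hb

theorem finrank_vectorSpan_insert_le_card {a : V} {s : Finset V} (ha : ∀ x ∈ s, x < a) :
    finrank 𝕜 (vectorSpan 𝕜 (insert a s : Set V)) ≤ #{b ∈ s | a + b ∉ s + s} :=
  (Submodule.finrank_mono (vectorSpan_insert_le_span ha)).trans <|
    (finrank_span_finset_le_card _).trans card_image_le

theorem freiman_lemma_of_linearOrder (A : Finset V) {d : ℕ}
    (hd : d ≤ finrank 𝕜 (vectorSpan 𝕜 (A : Set V))) :
    (d + 1) * #A ≤ #(A + A) + (d + 1).choose 2 := by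
  induction A using Finset.induction_on_max generalizing d with
  | empty => simp
  | insert a s ha ih =>
    rw [coe_insert] at hd
    rw [card_insert_of_notMem fun h => (ha a h).false]
    rcases le_or_gt d (finrank 𝕜 (vectorSpan 𝕜 (s : Set V))) with hds | hds
    · have hsum := card_add_self_add_card_lt_card_insert_add_insert ha (filter_subset _ s)
        fun b hb => (mem_filter.mp hb).2
      have hcard := hd.trans (finrank_vectorSpan_insert_le_card ha)
      linarith [ih hds]
    · have hspan : a ∉ affineSpan 𝕜 (s : Set V) := fun h => by
        rw [← direction_affineSpan, affineSpan_insert_eq_affineSpan 𝕜 h,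
          direction_affineSpan] at hd
        exact hds.not_ge hd
      have hsum := card_add_self_add_card_lt_card_insert_add_insert ha subset_rfl
        fun b hb => add_notMem_add_self_of_notMem_affineSpan hspan hb
      have := finiteDimensional_vectorSpan_of_finite 𝕜 s.finite_toSet
      have hrank := finrank_vectorSpan_insert_le_set 𝕜 (s : Set V) a
      obtain ⟨d, rfl⟩ := Nat.exists_eq_add_one_of_ne_zero (Nat.ne_zero_of_lt hds)
      have hchoose : (d + 1 + 1).choose 2 = (d + 1) + (d + 1).choose 2 := by
        rw [Nat.choose_succ_succ', Nat.choose_one_right]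
      linarith [ih (d := d) (by lia)]

end LinearOrder

/- The lexicographic order on coordinates in a basis makes `V` an ordered group. -/
theorem freiman_lemma [LinearOrder 𝕜] [IsStrictOrderedRing 𝕜] [DecidableEq V] (A : Finset V) {d : ℕ}
    (hd : d ≤ finrank 𝕜 (vectorSpan 𝕜 (A : Set V))) :
    (d + 1) * #A ≤ #(A + A) + (d + 1).choose 2 := by
  classical
  let b := Basis.ofVectorSpace 𝕜 V
  let : LinearOrder (Basis.ofVectorSpaceIndex 𝕜 V) := linearOrderOfSTO WellOrderingRel
  let f : V → Lex (Basis.ofVectorSpaceIndex 𝕜 V →₀ 𝕜) := fun v => toLex (b.repr v)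
  have hf : Function.Injective f := toLex.injective.comp b.repr.injective
  let : LinearOrder V := LinearOrder.lift' f hf
  have : IsOrderedAddMonoid V :=
    Function.Injective.isOrderedAddMonoid f (fun x y => by simp [f]) Iff.rfl
  convert freiman_lemma_of_linearOrder A hd

end Freiman

section MixedEnergy

variable {ι α M : Type*} [Fintype ι] [DecidableEq ι] [CommMonoid M] [DecidableEq M]

/-- The mixed multiplicative energy of the sets `f(B s)`: the number of solutions of
`∏ i, f (x i) = ∏ i, f (y i)` with `x i ∈ B (inl i)` and `y i ∈ B (inr i)`. -/
def mixedEnergy (f : α → M) (B : ι ⊕ ι → Finset α) : ℕ :=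
  #{z ∈ Fintype.piFinset B | ∏ i, f (z (.inl i)) = ∏ i, f (z (.inr i))}

theorem mixedEnergy_le_prod_card (f : α → M) (B : ι ⊕ ι → Finset α) :
    mixedEnergy f B ≤ ∏ s, #(B s) :=
  (card_filter_le _ _).trans_eq (Fintype.card_piFinset B)

theorem mixedEnergy_le_sum {κ : Type*} {f : α → M} {B : ι ⊕ ι → Finset α} (C : Finset κ)
    (D : κ → ι ⊕ ι → Finset α)
    (hBD : ∀ z ∈ Fintype.piFinset B, ∏ i, f (z (.inl i)) = ∏ i, f (z (.inr i)) →
      ∃ c ∈ C, ∀ s, z s ∈ D c s) :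
    mixedEnergy f B ≤ ∑ c ∈ C, mixedEnergy f (D c) := by
  classical
  refine (card_le_card fun z hz => ?_).trans card_biUnion_le
  obtain ⟨hzB, hfz⟩ := mem_filter.mp hz
  obtain ⟨c, hc, hzc⟩ := hBD z hzB hfz
  exact mem_biUnion.mpr ⟨c, hc, mem_filter.mpr ⟨Fintype.mem_piFinset.mpr hzc, hfz⟩⟩

theorem mixedEnergy_le_sum_fibers {κ : Type*} [DecidableEq κ] {f : α → M} {S : Finset α}
    (v : α → κ)
    (hv : ∀ z : ι ⊕ ι → α, (∀ s, z s ∈ S) → ∏ i, f (z (.inl i)) = ∏ i, f (z (.inr i)) →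
      ∃ s t, s ≠ t ∧ v (z s) = v (z t)) :
    mixedEnergy f (fun _ : ι ⊕ ι => S) ≤
      ∑ j ∈ S.image v, ∑ P ∈ powersetCard 2 (univ : Finset (ι ⊕ ι)),
        mixedEnergy f (P.piecewise (fun _ => {a ∈ S | v a = j}) fun _ => S) := by
  rw [← sum_product']
  refine mixedEnergy_le_sum _ _ fun z hz hfz => ?_
  rw [Fintype.mem_piFinset] at hz
  obtain ⟨s, t, hst, hvst⟩ := hv z hz hfz
  refine ⟨(v (z s), {s, t}), by simp [mem_image_of_mem v (hz s), hst], fun r => ?_⟩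
  by_cases hr : r ∈ ({s, t} : Finset (ι ⊕ ι))
  · rw [piecewise_eq_of_mem _ _ _ hr]
    rcases mem_insert.mp hr with rfl | hr
    · exact mem_filter.mpr ⟨hz r, rfl⟩
    · rw [mem_singleton.mp hr]
      exact mem_filter.mpr ⟨hz t, hvst.symm⟩
  · rw [piecewise_eq_of_notMem _ _ _ hr]
    exact hz r

theorem mixedEnergy_comp {N : Type*} [CommMonoid N] [DecidableEq N] {f : α → M}
    {B : ι ⊕ ι → Finset α} (φ : M →* N)
    (hφ : ∀ z ∈ Fintype.piFinset B,
      φ (∏ i, f (z (.inl i))) = φ (∏ i, f (z (.inr i))) →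
        ∏ i, f (z (.inl i)) = ∏ i, f (z (.inr i))) :
    mixedEnergy (φ ∘ f) B = mixedEnergy f B := by
  refine congrArg card (filter_congr fun z hz => ?_)
  simpa only [Function.comp_apply, ← map_prod] using ⟨hφ z hz, congrArg φ⟩

theorem card_sq_le_card_image_mul_card_filter_eq {β γ : Type*} [DecidableEq γ] (T : Finset β)
    (g : β → γ) : #T ^ 2 ≤ #(T.image g) * #{xy ∈ T ×ˢ T | g xy.1 = g xy.2} := by
  have hmaps : ∀ x ∈ T, g x ∈ T.image g := fun x => mem_image_of_mem g
  have henergy : ∑ c ∈ T.image g, #{x ∈ T | g x = c} ^ 2 = #{xy ∈ T ×ˢ T | g xy.1 = g xy.2} := by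
    rw [card_eq_sum_card_fiberwise (f := fun xy => g xy.1) (t := T.image g) fun xy hxy =>
      hmaps _ (mem_product.mp (mem_filter.mp hxy).1).1]
    refine sum_congr rfl fun c _ => ?_
    rw [sq, ← card_product, filter_filter]
    congr 1
    ext xy
    simp only [mem_product, mem_filter]
    grind
  calc #T ^ 2 = (∑ c ∈ T.image g, #{x ∈ T | g x = c}) ^ 2 := by
        rw [← card_eq_sum_card_fiberwise hmaps]
    _ ≤ #(T.image g) * ∑ c ∈ T.image g, #{x ∈ T | g x = c} ^ 2 := sq_sum_le_card_mul_sum_sq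
    _ = _ := by rw [henergy]

theorem card_pow_sq_le_card_image_mul_mixedEnergy (f : α → M) (A : Finset α) :
    (#A ^ Fintype.card ι) ^ 2 ≤
      #((Fintype.piFinset fun _ : ι => A).image fun x => ∏ i, f (x i)) *
        mixedEnergy f fun _ : ι ⊕ ι => A := by
  have hcard : #(Fintype.piFinset fun _ : ι => A) = #A ^ Fintype.card ι := by simp
  rw [← hcard]
  refine (card_sq_le_card_image_mul_card_filter_eq (Fintype.piFinset fun _ : ι => A)
    fun x => ∏ i, f (x i)).trans_eq ?_
  congr 1
  exact card_equiv (Equiv.sumArrowEquivProdArrow ι ι α).symm fun xy => by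
    simp [Equiv.sumArrowEquivProdArrow]

theorem card_pow_sq_le_card_kfoldProdInt_mul_mixedEnergy (k : ℕ) (A : Finset ℤ) (u : ℤ) :
    (#A ^ k) ^ 2 ≤ #(kfoldProdInt k (A.image (· + u))) *
      mixedEnergy (· + u) fun _ : Fin k ⊕ Fin k => A := by
  rw [kfoldProdInt, Fintype.piFinset_image, image_image]
  simpa [Function.comp_def] using card_pow_sq_le_card_image_mul_mixedEnergy (ι := Fin k) (· + u) A

end MixedEnergy

section Holder

open scoped NNReal

open MeasureTheory in
theorem sum_prod_pow_card_le_prod_sum_pow_card {ι X : Type*} [Fintype X] (s : Finset ι)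
    (g : ι → X → ℝ≥0) : (∑ x, ∏ i ∈ s, g i x) ^ #s ≤ ∏ i ∈ s, ∑ x, g i x ^ #s := by
  rcases s.eq_empty_or_nonempty with rfl | hs
  · simp
  have hcard : #s ≠ 0 := hs.card_ne_zero
  let _ : MeasurableSpace X := ⊤
  have h := ENNReal.lintegral_prod_norm_pow_le (μ := Measure.count) s
    (f := fun i x => (g i x : ENNReal) ^ #s) (fun i _ => (measurable_of_finite _).aemeasurable)
    (p := fun _ => (#s : ℝ)⁻¹) (by simp [hcard]) (fun _ _ => by positivity)
  simp only [ENNReal.pow_rpow_inv_natCast hcard, lintegral_fintype, Measure.count_singleton,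
    mul_one] at h
  have hpow := pow_le_pow_left' h #s
  simp only [← prod_pow, ENNReal.rpow_inv_natCast_pow hcard] at hpow
  exact_mod_cast hpow

/-- The sum of the values of a Dirichlet character over the image of `S` under `f`, counted with
multiplicity. -/
noncomputable def charSum {α : Type*} {q : ℕ} (f : α → ZMod q) (S : Finset α)
    (χ : DirichletCharacter ℂ q) : ℂ :=
  ∑ a ∈ S, χ (f a)

variable {ι α : Type*} [Fintype ι] [DecidableEq ι] {q : ℕ}

theorem prod_charSum_mul_prod_star_charSum (f : α → ZMod q) (B : ι ⊕ ι → Finset α)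
    (χ : DirichletCharacter ℂ q) :
    (∏ i, charSum f (B (.inl i)) χ) * ∏ i, star (charSum f (B (.inr i)) χ) =
      ∑ z ∈ Fintype.piFinset B,
        χ (∏ i, f (z (.inl i))) * star (χ (∏ i, f (z (.inr i)))) := by
  let ψ : ι ⊕ ι → α → ℂ := Sum.elim (fun _ a => χ (f a)) fun _ a => star (χ (f a))
  calc _ = ∏ s, ∑ a ∈ B s, ψ s a := by simp [ψ, charSum, Fintype.prod_sum_type]
    _ = ∑ z ∈ Fintype.piFinset B, ∏ s, ψ s (z s) := prod_univ_sum B ψ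
    _ = _ := by simp [ψ, Fintype.prod_sum_type]

theorem sum_char_mul_star_char_eq [NeZero q] (a : ZMod q) {b : ZMod q} (hb : IsUnit b) :
    ∑ χ : DirichletCharacter ℂ q, χ a * star (χ b) = if a = b then (q.totient : ℂ) else 0 := by
  have hstar : ∀ χ : DirichletCharacter ℂ q, star (χ b) = χ b⁻¹ := fun χ => by
    rw [MulChar.star_apply', MulChar.inv_apply_eq_inv']
    refine (eq_inv_of_mul_eq_one_left ?_).symm
    rw [← map_mul, ZMod.inv_mul_of_unit _ hb, map_one]
  simp only [hstar, mul_comm (DFunLike.coe _ a), DirichletCharacter.sum_char_inv_mul_char_eq ℂ hb,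
    eq_comm]

theorem totient_mul_mixedEnergy [NeZero q] {f : α → ZMod q} {B : ι ⊕ ι → Finset α}
    (hf : ∀ i, ∀ a ∈ B (.inr i), IsUnit (f a)) :
    (q.totient : ℂ) * mixedEnergy f B =
      ∑ χ : DirichletCharacter ℂ q,
        (∏ i, charSum f (B (.inl i)) χ) * ∏ i, star (charSum f (B (.inr i)) χ) := by
  have hunit : ∀ z ∈ Fintype.piFinset B, IsUnit (∏ i, f (z (.inr i))) := fun z hz =>
    IsUnit.prod_univ_iff.mpr fun i => hf i _ (Fintype.mem_piFinset.mp hz _)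
  simp_rw [prod_charSum_mul_prod_star_charSum]
  rw [sum_comm, sum_congr rfl fun z hz => sum_char_mul_star_char_eq _ (hunit z hz), ← sum_filter,
    sum_const, nsmul_eq_mul, mul_comm, mixedEnergy]

theorem totient_mul_mixedEnergy_le [NeZero q] {f : α → ZMod q} {B : ι ⊕ ι → Finset α}
    (hf : ∀ i, ∀ a ∈ B (.inr i), IsUnit (f a)) :
    (q.totient : ℝ≥0) * mixedEnergy f B ≤
      ∑ χ : DirichletCharacter ℂ q, ∏ s, ‖charSum f (B s) χ‖₊ := by
  have h := congrArg (‖·‖₊) (totient_mul_mixedEnergy hf)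
  simp only [nnnorm_mul, Complex.nnnorm_natCast] at h
  rw [h]
  refine (nnnorm_sum_le _ _).trans_eq (sum_congr rfl fun χ _ => ?_)
  simp [Fintype.prod_sum_type]

theorem totient_mul_mixedEnergy_const [NeZero q] {f : α → ZMod q} {S : Finset α}
    (hf : ∀ a ∈ S, IsUnit (f a)) :
    (q.totient : ℝ≥0) * mixedEnergy f (fun _ : ι ⊕ ι => S) =
      ∑ χ : DirichletCharacter ℂ q, ‖charSum f S χ‖₊ ^ Fintype.card (ι ⊕ ι) := by
  have h := totient_mul_mixedEnergy (ι := ι) (B := fun _ => S) fun _ => hf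
  have hχ : ∀ x : ℂ, x ^ Fintype.card ι * star x ^ Fintype.card ι =
      (‖x‖₊ ^ Fintype.card (ι ⊕ ι) : ℝ≥0) := fun x => by
    rw [← mul_pow, Fintype.card_sum, ← two_mul, pow_mul]
    push_cast
    exact congrArg (· ^ Fintype.card ι) (Complex.mul_conj' x)
  simp only [prod_const, card_univ, hχ] at h
  exact_mod_cast h

theorem mixedEnergy_pow_card_le_prod_of_isUnit [NeZero q] {f : α → ZMod q}
    {B : ι ⊕ ι → Finset α} (hf : ∀ s, ∀ a ∈ B s, IsUnit (f a)) :
    mixedEnergy f B ^ Fintype.card (ι ⊕ ι) ≤ ∏ s, mixedEnergy f fun _ : ι ⊕ ι => B s := by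
  have hq : (q.totient : ℝ≥0) ≠ 0 := mod_cast (Nat.totient_pos.mpr (NeZero.pos q)).ne'
  have h : ((q.totient : ℝ≥0) * mixedEnergy f B) ^ Fintype.card (ι ⊕ ι) ≤
      ∏ s, (q.totient : ℝ≥0) * mixedEnergy f fun _ : ι ⊕ ι => B s := by
    simp only [totient_mul_mixedEnergy_const (hf _)]
    exact (pow_le_pow_left' (totient_mul_mixedEnergy_le fun i => hf _) _).trans
      (sum_prod_pow_card_le_prod_sum_pow_card univ fun s χ => ‖charSum f (B s) χ‖₊)
  rw [mul_pow, prod_mul_distrib, prod_const, card_univ] at h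
  exact_mod_cast le_of_mul_le_mul_left h (by positivity)

theorem exists_prime_intCast_eq_zero_imp (D : Finset ℤ) :
    ∃ q : ℕ, q.Prime ∧ ∀ x ∈ D, (x : ZMod q) = 0 → x = 0 := by
  obtain ⟨q, hDq, hq⟩ := Nat.exists_infinite_primes (D.sup Int.natAbs + 1)
  refine ⟨q, hq, fun x hx hxq => Int.natAbs_eq_zero.mp (Nat.eq_zero_of_dvd_of_lt
    (Int.natCast_dvd.mp ((ZMod.intCast_zmod_eq_zero_iff_dvd x q).mp hxq)) ?_)⟩
  exact (Nat.lt_succ_of_le (le_sup (f := Int.natAbs) hx)).trans_le hDq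

theorem mixedEnergy_pow_card_le_prod {f : α → ℤ} {B : ι ⊕ ι → Finset α}
    (hf : ∀ s, ∀ a ∈ B s, f a ≠ 0) :
    mixedEnergy f B ^ Fintype.card (ι ⊕ ι) ≤ ∏ s, mixedEnergy f fun _ : ι ⊕ ι => B s := by
  classical
  let U : Finset α := univ.biUnion B
  let Δ : (ι ⊕ ι → α) → ℤ := fun z => ∏ i, f (z (.inl i)) - ∏ i, f (z (.inr i))
  obtain ⟨q, hq, hzero⟩ := exists_prime_intCast_eq_zero_imp
    (U.image f ∪ (Fintype.piFinset fun _ => U).image Δ)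
  have : Fact q.Prime := ⟨hq⟩
  have hBU : ∀ s, B s ⊆ U := fun s => subset_biUnion_of_mem B (mem_univ s)
  let φ : ℤ →* ZMod q := (Int.castRingHom (ZMod q) : ℤ →* ZMod q)
  have hφ : ∀ C : ι ⊕ ι → Finset α, (∀ s, C s ⊆ U) → mixedEnergy (φ ∘ f) C = mixedEnergy f C :=
    fun C hC => mixedEnergy_comp φ fun z hz h => sub_eq_zero.mp <| hzero (Δ z)
      (mem_union_right _ (mem_image_of_mem Δ (Fintype.piFinset_subset _ _ hC hz))) <| by
        simpa [Δ, sub_eq_zero, φ] using h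
  have hunit : ∀ s, ∀ a ∈ B s, IsUnit ((φ ∘ f) a) := fun s a ha => isUnit_iff_ne_zero.mpr fun h =>
    hf s a ha (hzero (f a) (mem_union_left _ (mem_image_of_mem f (hBU s ha))) h)
  simpa only [hφ B hBU, hφ _ fun _ => hBU _] using mixedEnergy_pow_card_le_prod_of_isUnit hunit

end Holder

section EnergyNorm

variable {α M : Type*}

/-- The `2k`-th root of the number of solutions of `f (x₁) ⋯ f (x_k) = f (y₁) ⋯ f (y_k)` in `S`. If
`M` is a finite abelian group, this is a multiple of the `ℓ^{2k}` norm of the Fourier transform of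
the image of `S` under `f`. -/
noncomputable def energyNorm [CommMonoid M] [DecidableEq M] (k : ℕ) (f : α → M) (S : Finset α) :
    ℝ :=
  (mixedEnergy f fun _ : Fin k ⊕ Fin k => S : ℝ) ^ ((2 * k : ℕ) : ℝ)⁻¹

theorem energyNorm_nonneg [CommMonoid M] [DecidableEq M] (k : ℕ) (f : α → M) (S : Finset α) :
    0 ≤ energyNorm k f S :=
  Real.rpow_nonneg (Nat.cast_nonneg _) _

variable {k : ℕ} (hk : k ≠ 0)
include hk

theorem energyNorm_pow [CommMonoid M] [DecidableEq M] (f : α → M) (S : Finset α) :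
    energyNorm k f S ^ (2 * k) = mixedEnergy f fun _ : Fin k ⊕ Fin k => S :=
  Real.rpow_inv_natCast_pow (Nat.cast_nonneg _) (by positivity)

theorem energyNorm_le_card [CommMonoid M] [DecidableEq M] (f : α → M) (S : Finset α) :
    energyNorm k f S ≤ #S := by
  refine le_of_pow_le_pow_left₀ (n := 2 * k) (by positivity) (Nat.cast_nonneg _) ?_
  rw [energyNorm_pow hk]
  exact_mod_cast (mixedEnergy_le_prod_card f _).trans_eq (by simp [two_mul])

theorem mixedEnergy_le_prod_energyNorm {f : α → ℤ} {B : Fin k ⊕ Fin k → Finset α}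
    (hf : ∀ s, ∀ a ∈ B s, f a ≠ 0) : (mixedEnergy f B : ℝ) ≤ ∏ s, energyNorm k f (B s) := by
  refine le_of_pow_le_pow_left₀ (n := 2 * k) (by positivity)
    (prod_nonneg fun s _ => energyNorm_nonneg k f (B s)) ?_
  rw [← prod_pow]
  simp only [energyNorm_pow hk]
  have h := mixedEnergy_pow_card_le_prod hf
  rw [Fintype.card_sum, Fintype.card_fin, ← two_mul] at h
  exact_mod_cast h

theorem mixedEnergy_piecewise_le {f : α → ℤ} {S T : Finset α} (hS : ∀ a ∈ S, f a ≠ 0)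
    (hT : ∀ a ∈ T, f a ≠ 0) (P : Finset (Fin k ⊕ Fin k)) :
    (mixedEnergy f (P.piecewise (fun _ => S) fun _ => T) : ℝ) ≤
      energyNorm k f S ^ #P * energyNorm k f T ^ (2 * k - #P) := by
  refine (mixedEnergy_le_prod_energyNorm hk fun s => ?_).trans_eq ?_
  · by_cases hs : s ∈ P <;> simpa [hs]
  · have hcard : #Pᶜ = 2 * k - #P := by simp [card_compl, two_mul]
    rw [← prod_mul_prod_compl P, ← hcard]
    congr 1 <;> refine prod_eq_pow_card fun s hs => ?_
    · rw [piecewise_eq_of_mem _ _ _ hs]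
    · rw [piecewise_eq_of_notMem _ _ _ (mem_compl.mp hs)]

/- The pair of coordinates with equal `v` contributes the two factors `energyNorm` of a fiber, by
Hölder's inequality, and the other `2k - 2` factors cancel. -/
theorem energyNorm_sq_le_sum_fibers {κ : Type*} [DecidableEq κ] {f : α → ℤ} {S : Finset α}
    (hf : ∀ a ∈ S, f a ≠ 0) (v : α → κ)
    (hv : ∀ z : Fin k ⊕ Fin k → α, (∀ s, z s ∈ S) →
      ∏ i, f (z (.inl i)) = ∏ i, f (z (.inr i)) → ∃ s t, s ≠ t ∧ v (z s) = v (z t)) :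
    energyNorm k f S ^ 2 ≤
      (2 * k).choose 2 * ∑ j ∈ S.image v, energyNorm k f {a ∈ S | v a = j} ^ 2 := by
  rcases (energyNorm_nonneg k f S).eq_or_lt with hS | hS
  · rw [← hS, zero_pow two_ne_zero]
    exact mul_nonneg (Nat.cast_nonneg _) (sum_nonneg fun j _ => sq_nonneg _)
  set N := energyNorm k f
  set F : κ → Finset α := fun j => {a ∈ S | v a = j}
  have hholder : ∀ j, ∀ P ∈ powersetCard 2 (univ : Finset (Fin k ⊕ Fin k)),
      (mixedEnergy f (P.piecewise (fun _ => F j) fun _ => S) : ℝ) ≤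
        N (F j) ^ 2 * N S ^ (2 * k - 2) := fun j P hP => by
    have h := mixedEnergy_piecewise_le hk (S := F j) (fun a ha => hf a (filter_subset _ S ha)) hf P
    rwa [(mem_powersetCard.mp hP).2] at h
  refine le_of_mul_le_mul_right ?_ (pow_pos hS (2 * k - 2))
  calc N S ^ 2 * N S ^ (2 * k - 2) = mixedEnergy f fun _ : Fin k ⊕ Fin k => S := by
        rw [← pow_add, ← energyNorm_pow hk]
        congr 1
        lia
    _ ≤ ∑ j ∈ S.image v, ∑ P ∈ powersetCard 2 (univ : Finset (Fin k ⊕ Fin k)),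
          (mixedEnergy f (P.piecewise (fun _ => F j) fun _ => S) : ℝ) :=
        mod_cast mixedEnergy_le_sum_fibers v hv
    _ ≤ ∑ j ∈ S.image v, ∑ _P ∈ powersetCard 2 (univ : Finset (Fin k ⊕ Fin k)),
          N (F j) ^ 2 * N S ^ (2 * k - 2) :=
        sum_le_sum fun j _ => sum_le_sum (hholder j)
    _ = (2 * k).choose 2 * (∑ j ∈ S.image v, N (F j) ^ 2) * N S ^ (2 * k - 2) := by
        simp [← mul_sum, ← sum_mul, ← two_mul, mul_assoc]

end EnergyNorm

section Divisibility

variable {ι R : Type*} [Fintype ι] [CommRing R]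

/- Modulo `n`, all but one of the factors are equal to the unit `u`. -/
theorem dvd_of_prod_add_eq_prod_add {n u : R} (hu : IsCoprime n u) {z w : ι → R}
    (h : ∏ i, (z i + u) = ∏ i, (w i + u)) {i₀ : ι} (hz : ∀ i ≠ i₀, n ∣ z i) (hw : ∀ i, n ∣ w i) :
    n ∣ z i₀ := by
  classical
  let φ := Ideal.Quotient.mk (Ideal.span {n})
  have hφ : ∀ x, φ x = 0 ↔ n ∣ x := fun x => Ideal.Quotient.eq_zero_iff_dvd n x
  have hunit : IsUnit (φ u) := isCoprime_zero_left.mp ((hφ n).mpr dvd_rfl ▸ hu.map φ)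
  have hL : ∏ i, φ (z i + u) = (φ (z i₀) + φ u) * ∏ _i ∈ {i₀}ᶜ, φ u := by
    rw [Fintype.prod_eq_mul_prod_compl i₀, map_add]
    refine congrArg (_ * ·) (prod_congr rfl fun i hi => ?_)
    rw [map_add, (hφ _).mpr (hz i (by simpa using hi)), zero_add]
  have hR : ∏ i, φ (w i + u) = φ u * ∏ _i ∈ {i₀}ᶜ, φ u := by
    simp only [map_add, (hφ _).mpr (hw _), zero_add, Fintype.prod_eq_mul_prod_compl i₀]
  rw [← map_prod, h, map_prod, hR, add_mul, right_eq_add, prod_const,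
    (hunit.pow _).mul_left_eq_zero, hφ] at hL
  exact hL

theorem exists_emultiplicity_eq_of_prod_add_eq_prod_add [Nonempty ι] {p u : R} (hu : IsCoprime p u)
    {z : ι ⊕ ι → R} (h : ∏ i, (z (.inl i) + u) = ∏ i, (z (.inr i) + u)) :
    ∃ s t, s ≠ t ∧ emultiplicity p (z s) = emultiplicity p (z t) := by
  by_contra! hne
  obtain ⟨s, hs⟩ := Finite.exists_min fun s => emultiplicity p (z s)
  have hlt : ∀ t, s ≠ t → emultiplicity p (z s) < emultiplicity p (z t) := fun t hst =>
    (hs t).lt_of_ne (hne s t hst)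
  obtain ⟨m, hm⟩ := ENat.ne_top_iff_exists.mp (hlt s.swap (by cases s <;> simp)).ne_top
  have hdvd : ∀ t, s ≠ t → p ^ (m + 1) ∣ z t := fun t hst =>
    pow_dvd_of_le_emultiplicity (by simpa [← hm] using Order.add_one_le_of_lt (hlt t hst))
  have hnot : ¬ p ^ (m + 1) ∣ z s := fun hdvd => by
    have := le_emultiplicity_of_pow_dvd hdvd
    rw [← hm] at this
    exact absurd (Nat.cast_le.mp this) (by lia)
  rcases s with i | i
  · exact hnot <| dvd_of_prod_add_eq_prod_add hu.pow_left h
      (fun j hj => hdvd _ (Sum.inl_injective.ne hj.symm)) fun j => hdvd _ Sum.inl_ne_inr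
  · exact hnot <| dvd_of_prod_add_eq_prod_add hu.pow_left h.symm
      (fun j hj => hdvd _ (Sum.inr_injective.ne hj.symm)) fun j => hdvd _ Sum.inr_ne_inl

end Divisibility

theorem energyNorm_sq_le_sum_emultiplicity {k : ℕ} (hk : k ≠ 0) {p u : ℤ} (hu : IsCoprime p u)
    {S : Finset ℤ} (hS : ∀ a ∈ S, a + u ≠ 0) :
    energyNorm k (· + u) S ^ 2 ≤ (2 * k).choose 2 *
      ∑ j ∈ S.image (emultiplicity p), energyNorm k (· + u) {a ∈ S | emultiplicity p a = j} ^ 2 :=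
  have : NeZero k := ⟨hk⟩
  energyNorm_sq_le_sum_fibers hk hS (emultiplicity p) fun _ _ h =>
    exists_emultiplicity_eq_of_prod_add_eq_prod_add hu h

section MulDim

open Module

theorem finrank_vectorSpan_lt_of_forall_map_eq {𝕜 V : Type*} [DivisionRing 𝕜] [AddCommGroup V]
    [Module 𝕜 V] {s t : Set V} (hs : s.Finite) (hts : t ⊆ s) (φ : V →ₗ[𝕜] 𝕜)
    (ht : ∀ x ∈ t, ∀ y ∈ t, φ x = φ y) {a b : V} (ha : a ∈ s) (hb : b ∈ s) (hab : φ a ≠ φ b) :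
    finrank 𝕜 (vectorSpan 𝕜 t) < finrank 𝕜 (vectorSpan 𝕜 s) := by
  have := finiteDimensional_vectorSpan_of_finite 𝕜 hs
  refine Submodule.finrank_lt_finrank_of_lt
    ((vectorSpan_mono 𝕜 hts).lt_of_ne fun heq => hab ?_)
  have hker : vectorSpan 𝕜 t ≤ LinearMap.ker φ := by
    rw [vectorSpan_def, Submodule.span_le]
    rintro _ ⟨x, hx, y, hy, rfl⟩
    simp [ht x hx y hy]
  have h : φ (a - b) = 0 := hker (heq ▸ vsub_mem_vectorSpan 𝕜 ha hb)
  rwa [map_sub, sub_eq_zero] at h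

/-- The exponents in the prime factorization of the integer `a`, as a rational vector; the sign of
`a` is ignored, and `0` is sent to `0`. -/
noncomputable def exponentVector (a : ℤ) : ℕ →₀ ℚ :=
  a.natAbs.factorization.mapRange Nat.cast Nat.cast_zero

theorem exponentVector_apply (a : ℤ) (p : ℕ) : exponentVector a p = a.natAbs.factorization p :=
  rfl

theorem exponentVector_mul {a b : ℤ} (ha : a ≠ 0) (hb : b ≠ 0) :
    exponentVector (a * b) = exponentVector a + exponentVector b := by
  ext p
  simp [exponentVector_apply, Int.natAbs_mul,
    Nat.factorization_mul (Int.natAbs_ne_zero.mpr ha) (Int.natAbs_ne_zero.mpr hb)]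

theorem exponentVector_injOn_pos : Set.InjOn exponentVector {a | 0 < a} := by
  intro a (ha : 0 < a) b (hb : 0 < b) hab
  have hfactorization : ∀ p, a.natAbs.factorization p = b.natAbs.factorization p := fun p => by
    simpa [exponentVector_apply] using DFunLike.congr_fun hab p
  have := Nat.eq_of_factorization_eq (Int.natAbs_ne_zero.mpr ha.ne')
    (Int.natAbs_ne_zero.mpr hb.ne') hfactorization
  lia

theorem exponentVector_apply_eq_iff {a b : ℤ} (ha : a ≠ 0) (hb : b ≠ 0) {p : ℕ} (hp : p.Prime) :
    exponentVector a p = exponentVector b p ↔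
      emultiplicity (p : ℤ) a = emultiplicity (p : ℤ) b := by
  have : Fact p.Prime := ⟨hp⟩
  rw [exponentVector_apply, exponentVector_apply, Nat.cast_inj, Nat.factorization_def _ hp,
    Nat.factorization_def _ hp, ← Int.emultiplicity_natAbs, ← Int.emultiplicity_natAbs,
    ← padicValNat_eq_emultiplicity (Int.natAbs_ne_zero.mpr ha),
    ← padicValNat_eq_emultiplicity (Int.natAbs_ne_zero.mpr hb), Nat.cast_inj]

/-- The multiplicative dimension of a set of integers: the dimension of the affine span of their
exponent vectors. -/
noncomputable def mulDim (A : Finset ℤ) : ℕ :=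
  finrank ℚ (vectorSpan ℚ (exponentVector '' A))

theorem mulDim_lt_of_card_mul_self_le {A : Finset ℤ} (hA : ∀ a ∈ A, 0 < a) {K : ℕ}
    (hAA : #(A * A) ≤ K * #A) (hK : (K + 1).choose 2 < #A) : mulDim A < K := by
  by_contra! hdim
  rw [mulDim, ← coe_image] at hdim
  have hsum : A.image exponentVector + A.image exponentVector ⊆ (A * A).image exponentVector := by
    rw [add_subset_iff, forall_mem_image]
    intro a ha
    rw [forall_mem_image]
    intro b hb
    rw [← exponentVector_mul (hA a ha).ne' (hA b hb).ne']
    exact mem_image_of_mem _ (mul_mem_mul ha hb)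
  have hcard : #(A.image exponentVector + A.image exponentVector) ≤ K * #A :=
    (card_le_card hsum).trans (card_image_le.trans hAA)
  have hfreiman := freiman_lemma _ hdim
  rw [card_image_of_injOn (exponentVector_injOn_pos.mono hA)] at hfreiman
  linarith

theorem mulDim_filter_emultiplicity_lt {S : Finset ℤ} (hS : ∀ a ∈ S, a ≠ 0) {p : ℕ} (hp : p.Prime)
    {a b : ℤ} (ha : a ∈ S) (hb : b ∈ S)
    (hab : emultiplicity (p : ℤ) a ≠ emultiplicity (p : ℤ) b) (j : ℕ∞) :
    mulDim {x ∈ S | emultiplicity (p : ℤ) x = j} < mulDim S := by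
  refine finrank_vectorSpan_lt_of_forall_map_eq (S.finite_toSet.image _)
    (Set.image_mono (coe_subset.mpr (filter_subset _ S))) (Finsupp.lapply p) ?_
    (Set.mem_image_of_mem _ ha) (Set.mem_image_of_mem _ hb)
    ((exponentVector_apply_eq_iff (hS a ha) (hS b hb) hp).not.mpr hab)
  rintro _ ⟨x, hx, rfl⟩ _ ⟨y, hy, rfl⟩
  rw [mem_coe, mem_filter] at hx hy
  exact (exponentVector_apply_eq_iff (hS x hx.1) (hS y hy.1) hp).mpr (hx.2.trans hy.2.symm)

end MulDim

section Energy

variable {k : ℕ} {S : Finset ℤ} {u : ℤ}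

theorem exists_prime_emultiplicity_ne (hS : ∀ a ∈ S, 0 < a) (hcard : 1 < #S) :
    ∃ p : ℕ, p.Prime ∧ ∃ a ∈ S, ∃ b ∈ S, emultiplicity (p : ℤ) a ≠ emultiplicity (p : ℤ) b := by
  obtain ⟨a, ha, b, hb, hab⟩ := one_lt_card.mp hcard
  obtain ⟨p, hp⟩ := DFunLike.ne_iff.mp (exponentVector_injOn_pos.ne (hS a ha) (hS b hb) hab)
  have hprime : p.Prime := by
    by_contra hprime
    simp [exponentVector_apply, Nat.factorization_eq_zero_of_not_prime _ hprime] at hp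
  exact ⟨p, hprime, a, ha, b, hb,
    (exponentVector_apply_eq_iff (hS a ha).ne' (hS b hb).ne' hprime).not.mp hp⟩

theorem isCoprime_of_emultiplicity_ne {R : Type*} [CommSemiring R] {p u a b : R}
    (ha : IsCoprime u a) (hb : IsCoprime u b) (hab : emultiplicity p a ≠ emultiplicity p b) :
    IsCoprime p u := by
  by_cases hpa : p ∣ a
  · exact (ha.of_isCoprime_of_dvd_right hpa).symm
  · refine (hb.of_isCoprime_of_dvd_right (emultiplicity_ne_zero.mp ?_)).symm
    exact emultiplicity_eq_zero.mpr hpa ▸ hab.symm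

theorem energyNorm_sq_le (hk : k ≠ 0) (hpos : ∀ a ∈ S, 0 < a) (hcoprime : ∀ a ∈ S, IsCoprime u a)
    (hne : ∀ a ∈ S, a + u ≠ 0) :
    energyNorm k (· + u) S ^ 2 ≤ ((2 * k).choose 2 : ℝ) ^ mulDim S * #S := by
  have hC : (1 : ℝ) ≤ (2 * k).choose 2 := mod_cast Nat.choose_pos (by lia)
  induction hd : mulDim S using Nat.strong_induction_on generalizing S with
  | _ d ih =>
  subst hd
  rcases le_or_gt #S 1 with hcard | hcard
  · calc energyNorm k (· + u) S ^ 2 ≤ (#S : ℝ) ^ 2 :=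
          pow_le_pow_left₀ (energyNorm_nonneg k _ S) (energyNorm_le_card hk _ S) 2
      _ ≤ 1 * #S := by rw [sq]; gcongr; exact_mod_cast hcard
      _ ≤ _ := by gcongr; exact one_le_pow₀ hC
  · obtain ⟨p, hp, a, ha, b, hb, hab⟩ := exists_prime_emultiplicity_ne hpos hcard
    have hpu := isCoprime_of_emultiplicity_ne (hcoprime a ha) (hcoprime b hb) hab
    have hlt := mulDim_filter_emultiplicity_lt (fun x hx => (hpos x hx).ne') hp ha hb hab
    obtain ⟨d, hd⟩ := Nat.exists_eq_add_one_of_ne_zero (Nat.ne_zero_of_lt (hlt 0))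
    have hfiber : ∀ j, energyNorm k (· + u) {x ∈ S | emultiplicity (p : ℤ) x = j} ^ 2 ≤
        ((2 * k).choose 2 : ℝ) ^ d * #{x ∈ S | emultiplicity (p : ℤ) x = j} := fun j => by
      refine (ih _ (hlt j) (by grind) (by grind) (by grind) rfl).trans ?_
      gcongr
      exact Nat.le_of_lt_succ ((hlt j).trans_eq hd)
    calc energyNorm k (· + u) S ^ 2
        ≤ (2 * k).choose 2 * ∑ j ∈ S.image (emultiplicity (p : ℤ)),
            energyNorm k (· + u) {x ∈ S | emultiplicity (p : ℤ) x = j} ^ 2 :=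
          energyNorm_sq_le_sum_emultiplicity hk hpu hne
      _ ≤ (2 * k).choose 2 * ∑ j ∈ S.image (emultiplicity (p : ℤ)),
            ((2 * k).choose 2 : ℝ) ^ d * #{x ∈ S | emultiplicity (p : ℤ) x = j} := by
          gcongr
          exact hfiber _
      _ = ((2 * k).choose 2 : ℝ) ^ mulDim S * #S := by
          rw [← mul_sum, ← Nat.cast_sum, ← card_eq_sum_card_image, hd]
          ring

theorem mixedEnergy_add_le (hk : k ≠ 0) (hpos : ∀ a ∈ S, 0 < a)
    (hcoprime : ∀ a ∈ S, IsCoprime u a) (hne : ∀ a ∈ S, a + u ≠ 0) :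
    mixedEnergy (· + u) (fun _ : Fin k ⊕ Fin k => S) ≤
      (2 * k).choose 2 ^ (k * mulDim S) * #S ^ k := by
  have h := pow_le_pow_left₀ (sq_nonneg _) (energyNorm_sq_le hk hpos hcoprime hne) k
  rw [← pow_mul, energyNorm_pow hk, mul_pow, ← pow_mul, mul_comm (mulDim S)] at h
  exact_mod_cast h

theorem card_pow_le_mul_card_kfoldProdInt (hk : k ≠ 0) (hpos : ∀ a ∈ S, 0 < a)
    (hcoprime : ∀ a ∈ S, IsCoprime u a) (hne : ∀ a ∈ S, a + u ≠ 0) :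
    #S ^ k ≤ (2 * k).choose 2 ^ (k * mulDim S) * #(kfoldProdInt k (S.image (· + u))) := by
  rcases S.eq_empty_or_nonempty with rfl | hS
  · simp [hk]
  refine le_of_mul_le_mul_right ?_ (pow_pos hS.card_pos k)
  calc #S ^ k * #S ^ k = (#S ^ k) ^ 2 := (sq _).symm
    _ ≤ #(kfoldProdInt k (S.image (· + u))) * mixedEnergy (· + u) fun _ : Fin k ⊕ Fin k => S :=
        card_pow_sq_le_card_kfoldProdInt_mul_mixedEnergy k S u
    _ ≤ #(kfoldProdInt k (S.image (· + u))) * ((2 * k).choose 2 ^ (k * mulDim S) * #S ^ k) := by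
        gcongr
        exact mixedEnergy_add_le hk hpos hcoprime hne
    _ = _ := by ring

end Energy

theorem product_of_shift_integer_case (K : ℕ) (hK : 0 < K) :
    ∃ N : ℕ, ∀ k : ℕ, 2 ≤ k →
      ∀ A : Finset ℤ, (∀ a ∈ A, 0 < a) → N ≤ A.card →
      (A * A).card ≤ K * A.card →
      ∀ u : ℤ, u ≠ 0 → (∀ a ∈ A, IsCoprime u a) → -u ∉ A →
      (A.card : ℝ) ^ k / (2 * (k : ℝ) ^ 2) ^ (k * K) ≤
        ((kfoldProdInt k (A.image fun a => a + u)).card : ℝ) := by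
  refine ⟨(K + 1).choose 2 + 1, fun k hk A hpos hN hAA u _ hcoprime hu => ?_⟩
  have hne : ∀ a ∈ A, a + u ≠ 0 := fun a ha h => hu (eq_neg_of_add_eq_zero_left h ▸ ha)
  have hdim : mulDim A < K := mulDim_lt_of_card_mul_self_le hpos hAA hN
  have hC : (2 * k).choose 2 ≤ 2 * k ^ 2 := by
    rw [Nat.choose_two_right]
    exact Nat.div_le_of_le_mul (by nlinarith [Nat.sub_le (2 * k) 1])
  have hbase : 0 < 2 * k ^ 2 := by positivity
  have h : #A ^ k ≤ #(kfoldProdInt k (A.image fun a => a + u)) * (2 * k ^ 2) ^ (k * K) :=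
    calc #A ^ k ≤ (2 * k).choose 2 ^ (k * mulDim A) * #(kfoldProdInt k (A.image (· + u))) :=
          card_pow_le_mul_card_kfoldProdInt (by lia) hpos hcoprime hne
      _ ≤ (2 * k ^ 2) ^ (k * K) * #(kfoldProdInt k (A.image (· + u))) := by
          gcongr
      _ = _ := mul_comm _ _
  rw [div_le_iff₀ (by positivity)]
  exact_mod_cast h
end
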